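/- arXiv:2505.08279 — 2 statements merged into one kernel-verified Lean document; each statement's English description precedes it below -/
import Mathlib

section
/- Let 𝓕 ⊆ C([n],k) be a left-compressed t-intersecting family, let g(𝓕) ∈ G_*(𝓕) and s = s⁺(g(𝓕)). Suppose g*_i(𝓕) ≠ ∅ and set j = s + t − i with j ≠ i, and let 𝓕₁ = 𝓕 ∪ 𝒟(g*_i(𝓕)') \ 𝒟(g*_j(𝓕)). Then ζ_{k−1}(𝓕₁) − ζ_{k−1}(𝓕) ≥ |g*_i(𝓕)|·C(n−s, k−i)·C(n−s−k+i, 2) + ζ_{i−1,s}(g*_i(𝓕), 𝓕|_[s])·C(n−s, k−i+1) + |g*_i(𝓕)|·(s−i+1)(k−i+1)·C(n−s, k−i+1) − |g*_j(𝓕)|·C(n−s, k−j−1)·C(n−s−k+j+1, 2) − ζ_{j−1,s}(g*_j(𝓕), 𝓕|_[s])·C(n−s, k−j) − |g*_j(𝓕)|·(s−j)(k−j+1)·C(n−s, k−j). -/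
open Finset

/-- `[n] = {1, …, n}` as a finset of naturals. -/
def Iv (n : ℕ) : Finset ℕ := Finset.Icc 1 n

/-- The collection of `k`-element subsets of `[n]`. -/
def KSets (n k : ℕ) : Finset (Finset ℕ) := (Iv n).powersetCard k

/-- Codegree of `E` in the family `F`: the number of members of `F` containing `E`. -/
def codeg (F : Finset (Finset ℕ)) (E : Finset ℕ) : ℕ :=
  (F.filter fun A => E ⊆ A).card

/-- Codegree squared sum of a `k`-uniform family on `[n]`. -/
def co2 (n k : ℕ) (F : Finset (Finset ℕ)) : ℕ :=
  ∑ E ∈ KSets n (k - 1), codeg F E ^ 2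

/-- `t`-intersecting family. -/
def IntersectingT (t : ℕ) (F : Finset (Finset ℕ)) : Prop :=
  ∀ A ∈ F, ∀ B ∈ F, t ≤ (A ∩ B).card

/-- `ζ_u(F)`: the number of unordered pairs of distinct members of `F` meeting in
exactly `u` elements. -/
def zeta (u : ℕ) (F : Finset (Finset ℕ)) : ℕ :=
  ((F.offDiag.filter fun p => (p.1 ∩ p.2).card = u).image
    fun p => ({p.1, p.2} : Finset (Finset ℕ))).card

/-- `ζ_{u,v}(𝓖,𝓗)`: the number of unordered pairs `{F,G}` with `F ∈ 𝓖`, `G ∈ 𝓗`,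
`|F| = |G| = u+1`, `|F ∩ G| = u` and `v ∈ F ∩ G`. -/
def zeta2v (u v : ℕ) (G H : Finset (Finset ℕ)) : ℕ :=
  (((G ×ˢ H).filter fun p =>
      p.1.card = u + 1 ∧ p.2.card = u + 1 ∧ (p.1 ∩ p.2).card = u ∧ v ∈ p.1 ∩ p.2).image
    fun p => ({p.1, p.2} : Finset (Finset ℕ))).card

/-- The Hilton–Milner type family `H(n,k,t)`. -/
def HM (n k t : ℕ) : Finset (Finset ℕ) :=
  ((KSets n k).filter fun F => Iv t ⊆ F ∧ (F ∩ Finset.Icc (t + 1) (k + 1)).Nonempty) ∪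
    ((Iv t).image fun i => (Iv (k + 1)).erase i)

/-- The Frankl type family `A(n,k,t)`. -/
def AK (n k t : ℕ) : Finset (Finset ℕ) :=
  (KSets n k).filter fun F => t + 1 ≤ (F ∩ Iv (t + 2)).card

/-- Two families on `[n]` are isomorphic if one is the image of the other under a
permutation of `[n]` applied elementwise to each member. -/
def Isom (n : ℕ) (F G : Finset (Finset ℕ)) : Prop :=
  ∃ σ : Equiv.Perm ℕ, (∀ x ∈ Iv n, σ x ∈ Iv n) ∧ G = F.image fun A => A.image σ

/-- The elementary shift `δ_{ij}` of a single set. -/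
def shiftSet (i j : ℕ) (𝓐 : Finset (Finset ℕ)) (A : Finset ℕ) : Finset ℕ :=
  if j ∈ A ∧ i ∉ A ∧ insert i (A.erase j) ∉ 𝓐 then insert i (A.erase j) else A

/-- The shift operation `Δ_{ij}` on families. -/
def shiftFam (i j : ℕ) (𝓐 : Finset (Finset ℕ)) : Finset (Finset ℕ) :=
  𝓐.image (shiftSet i j 𝓐)

/-- Left-compressed family. -/
def LeftCompressed (n : ℕ) (F : Finset (Finset ℕ)) : Prop :=
  ∀ i j : ℕ, 1 ≤ i → i < j → j ≤ n → shiftFam i j F = F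

/-- `g` is a generating set of `F ⊆ C([n],k)`: its members are subsets of `[n]` of size at
most `k`, and `U(g) ∩ C([n],k) = F`. -/
def IsGenSet (n k : ℕ) (F g : Finset (Finset ℕ)) : Prop :=
  (∀ E ∈ g, E ⊆ Iv n ∧ E.card ≤ k) ∧
    (KSets n k).filter (fun A => ∃ E ∈ g, E ⊆ A) = F

/-- `s⁺` of a collection of finsets: the maximum element appearing. -/
def sPlus (g : Finset (Finset ℕ)) : ℕ := g.sup fun E => E.sup id

/-- `g*_i`: the members of `g` of size `i` containing `s`. -/
def gStar (g : Finset (Finset ℕ)) (s i : ℕ) : Finset (Finset ℕ) :=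
  g.filter fun E => s ∈ E ∧ E.card = i

/-- `𝒟(ℰ) = ∪_{E ∈ ℰ} {B ∈ C([n],k) : B ∩ [s⁺(E)] = E}`. -/
def Dcal (n k : ℕ) (ℰ : Finset (Finset ℕ)) : Finset (Finset ℕ) :=
  (KSets n k).filter fun B => ∃ E ∈ ℰ, B ∩ Iv (E.sup id) = E

/-- The family of `k`-subsets of `[n]` generated by `g`. -/
def genFam (n k : ℕ) (g : Finset (Finset ℕ)) : Finset (Finset ℕ) :=
  (KSets n k).filter fun A => ∃ E ∈ g, E ⊆ A

/-- Integer binomial coefficient: `C(a,b) = 0` when `b < 0` or `b > a`. -/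
def ichoose (a b : ℤ) : ℤ :=
  if 0 ≤ b ∧ b ≤ a then (a.toNat.choose b.toNat : ℤ) else 0


/-- The set of unordered pairs counted by `zeta`. -/
def zset (u : ℕ) (F : Finset (Finset ℕ)) : Finset (Finset (Finset ℕ)) :=
  (F.offDiag.filter fun p => (p.1 ∩ p.2).card = u).image
    fun p => ({p.1, p.2} : Finset (Finset ℕ))

/-- The set of unordered pairs counted by `zeta2v`. -/
def z2set (u v : ℕ) (G H : Finset (Finset ℕ)) : Finset (Finset (Finset ℕ)) :=
  ((G ×ˢ H).filter fun p =>
      p.1.card = u + 1 ∧ p.2.card = u + 1 ∧ (p.1 ∩ p.2).card = u ∧ v ∈ p.1 ∩ p.2).image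
    fun p => ({p.1, p.2} : Finset (Finset ℕ))

lemma mem_zset {u : ℕ} {F : Finset (Finset ℕ)} {P : Finset (Finset ℕ)} :
    P ∈ zset u F ↔ ∃ A ∈ F, ∃ B ∈ F, A ≠ B ∧ (A ∩ B).card = u ∧ P = {A, B} := by
  simp only [zset, mem_image, mem_filter, mem_offDiag, Prod.exists]
  constructor
  · rintro ⟨A, B, ⟨⟨hA, hB, hAB⟩, hu⟩, rfl⟩
    exact ⟨A, hA, B, hB, hAB, hu, rfl⟩
  · rintro ⟨A, hA, B, hB, hAB, hu, rfl⟩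
    exact ⟨A, B, ⟨⟨hA, hB, hAB⟩, hu⟩, rfl⟩

lemma mem_z2set {u v : ℕ} {G H : Finset (Finset ℕ)} {P : Finset (Finset ℕ)} :
    P ∈ z2set u v G H ↔ ∃ A ∈ G, ∃ B ∈ H, A.card = u + 1 ∧ B.card = u + 1 ∧
      (A ∩ B).card = u ∧ v ∈ A ∧ v ∈ B ∧ P = {A, B} := by
  simp only [z2set, mem_image, mem_filter, mem_product, Prod.exists, mem_inter]
  constructor
  · rintro ⟨A, B, ⟨⟨hA, hB⟩, h1, h2, h3, h4, h5⟩, rfl⟩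
    exact ⟨A, hA, B, hB, h1, h2, h3, h4, h5, rfl⟩
  · rintro ⟨A, hA, B, hB, h1, h2, h3, h4, h5, rfl⟩
    exact ⟨A, B, ⟨⟨hA, hB⟩, h1, h2, h3, h4, h5⟩, rfl⟩

/-- Two sets of the same size meeting in all but one element. -/
lemma exists_swap_elt {A B : Finset ℕ} {k : ℕ} (hA : A.card = k) (hB : B.card = k) (hAB : A ≠ B)
    (h : (A ∩ B).card = k - 1) :
    ∃ a b, a ∈ A ∧ a ∉ B ∧ b ∈ B ∧ b ∉ A ∧ B = insert b (A.erase a) ∧ A ∩ B = A.erase a := by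
  have hk : 0 < k := by
    rcases Nat.eq_zero_or_pos k with h0 | h0
    · subst h0
      rw [card_eq_zero] at hA hB
      exact absurd (hA.trans hB.symm) hAB
    · exact h0
  have h1 : (A \ B).card = 1 := by
    have := card_sdiff_add_card_inter A B
    omega
  have h2 : (B \ A).card = 1 := by
    have := card_sdiff_add_card_inter B A
    rw [inter_comm] at this
    omega
  obtain ⟨a, ha⟩ := card_eq_one.1 h1
  obtain ⟨b, hb⟩ := card_eq_one.1 h2
  have ha' : ∀ x, (x ∈ A ∧ x ∉ B) ↔ x = a := fun x => by
    rw [← mem_sdiff, ha, mem_singleton]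
  have hb' : ∀ x, (x ∈ B ∧ x ∉ A) ↔ x = b := fun x => by
    rw [← mem_sdiff, hb, mem_singleton]
  refine ⟨a, b, ((ha' a).2 rfl).1, ((ha' a).2 rfl).2, ((hb' b).2 rfl).1, ((hb' b).2 rfl).2, ?_, ?_⟩
  · ext x
    have := ha' x
    have := hb' x
    simp only [mem_insert, mem_erase]
    tauto
  · ext x
    have := ha' x
    simp only [mem_inter, mem_erase]
    tauto

lemma card_zset_powersetCard (V : Finset ℕ) (m : ℕ) :
    (zset m (V.powersetCard (m + 1))).card = V.card.choose m * (V.card - m).choose 2 := by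
  have h : (zset m (V.powersetCard (m + 1))).card =
      ((V.powersetCard m).sigma fun S => (V \ S).powersetCard 2).card := by
    symm
    refine card_bij (fun p _ => p.2.image fun x => insert x p.1) ?_ ?_ ?_
    · rintro ⟨S, Q⟩ h
      simp only [mem_sigma, mem_powersetCard] at h
      obtain ⟨⟨hS, hSm⟩, hQ, hQ2⟩ := h
      obtain ⟨a, b, hab, rfl⟩ := card_eq_two.1 hQ2
      have ha := mem_sdiff.1 (hQ (mem_insert_self a {b}))
      have hb := mem_sdiff.1 (hQ (mem_insert_of_mem (mem_singleton_self b)))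
      refine mem_zset.2 ⟨insert a S, ?_, insert b S, ?_, ?_, ?_, by simp [image_insert]⟩
      · rw [mem_powersetCard, card_insert_of_notMem ha.2, hSm]
        exact ⟨insert_subset ha.1 hS, rfl⟩
      · rw [mem_powersetCard, card_insert_of_notMem hb.2, hSm]
        exact ⟨insert_subset hb.1 hS, rfl⟩
      · intro he
        have : a ∈ insert b S := he ▸ mem_insert_self a S
        rcases mem_insert.1 this with h | h
        · exact hab h
        · exact ha.2 h
      · rw [← hSm]
        congr 1
        ext x
        simp only [mem_inter, mem_insert]
        grind
    · rintro ⟨S, Q⟩ h ⟨S', Q'⟩ h' he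
      simp only [mem_sigma, mem_powersetCard] at h h'
      obtain ⟨⟨hS, hSm⟩, hQ, hQ2⟩ := h
      obtain ⟨⟨hS', hSm'⟩, hQ', hQ2'⟩ := h'
      have key : ∀ S Q : Finset ℕ, Q ⊆ V \ S → Q.card = 2 → ∀ x, x ∈ S ↔
          ∀ A ∈ Q.image (fun x => insert x S), x ∈ A := by
        intro S Q hQ hQ2 x
        obtain ⟨a, b, hab, rfl⟩ := card_eq_two.1 hQ2
        simp only [image_insert, image_singleton, mem_insert, mem_singleton, forall_eq_or_imp,
          forall_eq]
        grind
      have key2 : ∀ S Q : Finset ℕ, Q ⊆ V \ S → Q.card = 2 → ∀ x, x ∈ Q ↔ x ∉ S ∧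
          ∃ A ∈ Q.image (fun x => insert x S), x ∈ A := by
        intro S Q hQ hQ2 x
        obtain ⟨a, b, hab, rfl⟩ := card_eq_two.1 hQ2
        have ha := mem_sdiff.1 (hQ (mem_insert_self a {b}))
        have hb := mem_sdiff.1 (hQ (mem_insert_of_mem (mem_singleton_self b)))
        simp only [image_insert, image_singleton, mem_insert, mem_singleton, exists_eq_or_imp,
          exists_eq_left]
        grind
      dsimp only at he
      have e1 : S = S' := by
        ext x
        rw [key S Q hQ hQ2, key S' Q' hQ' hQ2', he]
      subst e1
      have e2 : Q = Q' := by
        ext x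
        rw [key2 S Q hQ hQ2, key2 S Q' hQ' hQ2', he]
      subst e2
      rfl
    · intro P hP
      obtain ⟨A, hA, B, hB, hAB, hc, rfl⟩ := mem_zset.1 hP
      rw [mem_powersetCard] at hA hB
      obtain ⟨a, b, ha, ha', hb, hb', hBe, hi⟩ := exists_swap_elt hA.2 hB.2 hAB (by simpa using hc)
      refine ⟨⟨A.erase a, {a, b}⟩, ?_, ?_⟩
      · simp only [mem_sigma, mem_powersetCard]
        refine ⟨⟨(erase_subset _ _).trans hA.1, by rw [← hi, hc]⟩, ?_, ?_⟩
        · intro x hx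
          have := @hA.1 a
          have := @hB.1 b
          simp only [mem_insert, mem_singleton] at hx
          simp only [mem_sdiff, mem_erase]
          grind
        · rw [card_pair]
          rintro rfl
          exact ha' hb
      · simp [image_insert, insert_erase ha, ← hBe]
  rw [h, card_sigma, sum_congr rfl (g := fun _ => (V.card - m).choose 2), sum_const,
    card_powersetCard, smul_eq_mul]
  intro S hS
  rw [mem_powersetCard] at hS
  rw [card_powersetCard, card_sdiff_of_subset hS.1, hS.2]

lemma ichoose_nat (a b : ℕ) : ichoose a b = (a.choose b : ℤ) := by
  unfold ichoose
  split_ifs with h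
  · simp
  · rw [Nat.choose_eq_zero_of_lt (by omega)]; simp

/-- The integer form of the count, valid also for `m = 0`. -/
lemma card_zset_powersetCard' (V : Finset ℕ) (m : ℕ) :
    ((zset (m - 1) (V.powersetCard m)).card : ℤ) =
      ichoose V.card ((m : ℤ) - 1) * ichoose ((V.card : ℤ) - m + 1) 2 := by
  rcases m with _ | m
  · have h1 : zset (0 - 1) (V.powersetCard 0) = ∅ := by
      rw [eq_empty_iff_forall_notMem]
      intro P hP
      obtain ⟨A, hA, B, hB, hAB, -⟩ := mem_zset.1 hP
      simp at hA hB
      exact hAB (hA.trans hB.symm)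
    rw [h1]
    simp [ichoose]
  · rw [Nat.add_sub_cancel, card_zset_powersetCard]
    push_cast
    rw [show ((m : ℤ) + 1 - 1) = m by ring, ichoose_nat]
    rcases le_or_gt m V.card with h | h
    · rw [show ((V.card : ℤ) - (m + 1) + 1) = ((V.card - m : ℕ) : ℤ) by push_cast [h]; ring]
      rw [show (2 : ℤ) = ((2 : ℕ) : ℤ) by rfl, ichoose_nat]
    · rw [Nat.choose_eq_zero_of_lt h]; simp

lemma tr_union {s n : ℕ} {E T : Finset ℕ} (hE : E ⊆ Iv s) (hT : T ⊆ Icc (s + 1) n) :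
    (E ∪ T) ∩ Iv s = E := by
  ext x
  have h1 := @hE x
  have h2 := @hT x
  simp only [Iv, mem_inter, mem_union, mem_Icc] at *
  grind

lemma ctr_union {s n : ℕ} {E T : Finset ℕ} (hE : E ⊆ Iv s) (hT : T ⊆ Icc (s + 1) n) :
    (E ∪ T) \ Iv s = T := by
  ext x
  have h1 := @hE x
  have h2 := @hT x
  simp only [Iv, mem_sdiff, mem_union, mem_Icc] at *
  grind

lemma disj_ET {s n : ℕ} {E T : Finset ℕ} (hE : E ⊆ Iv s) (hT : T ⊆ Icc (s + 1) n) :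
    Disjoint E T := by
  rw [Finset.disjoint_left]
  intro x h1 h2
  have h1 := hE h1
  have h2 := hT h2
  simp only [Iv, mem_Icc] at *
  omega

lemma inter_card {s n : ℕ} {E T E' T' : Finset ℕ} (hE : E ⊆ Iv s) (hT : T ⊆ Icc (s + 1) n)
    (hE' : E' ⊆ Iv s) (hT' : T' ⊆ Icc (s + 1) n) :
    ((E ∪ T) ∩ (E' ∪ T')).card = (E ∩ E').card + (T ∩ T').card := by
  rw [← card_union_of_disjoint
    (disj_ET (inter_subset_left.trans hE) (inter_subset_left.trans hT))]
  congr 1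
  have d1 := Finset.disjoint_left.1 (disj_ET hE hT')
  have d2 := Finset.disjoint_left.1 (disj_ET hE' hT)
  ext x
  have := @d1 x
  have := @d2 x
  simp only [mem_inter, mem_union]
  tauto

lemma union_mem_KSets {s n k m : ℕ} {E T : Finset ℕ} (hsn : s ≤ n) (hE : E ⊆ Iv s)
    (hT : T ∈ (Icc (s + 1) n).powersetCard m) (h : E.card + m = k) : E ∪ T ∈ KSets n k := by
  rw [mem_powersetCard] at hT
  rw [KSets, mem_powersetCard, card_union_of_disjoint (disj_ET hE hT.1), hT.2]
  refine ⟨union_subset (hE.trans ?_) (hT.1.trans ?_), h⟩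
  · exact Icc_subset_Icc le_rfl hsn
  · exact Icc_subset_Icc (by omega) le_rfl

lemma split_KSets {s n k : ℕ} {A : Finset ℕ} (hA : A ∈ KSets n k) :
    A \ Iv s ⊆ Icc (s + 1) n ∧ A = (A ∩ Iv s) ∪ (A \ Iv s) ∧
      (A ∩ Iv s).card + (A \ Iv s).card = k := by
  rw [KSets, mem_powersetCard] at hA
  refine ⟨?_, by ext x; simp only [mem_union, mem_inter, mem_sdiff]; tauto, ?_⟩
  · intro x hx
    have := @hA.1 x
    simp only [Iv, mem_sdiff, mem_Icc] at *
    grind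
  · rw [← hA.2]
    exact card_inter_add_card_sdiff A (Iv s)

/-- Basic facts about a generating set of a left-compressed family. -/
structure Setup (n k s : ℕ) (F g : Finset (Finset ℕ)) : Prop where
  sn : s ≤ n
  s1 : 1 ≤ s
  sub : ∀ E ∈ g, E ⊆ Iv s
  memF : ∀ A, A ∈ F ↔ A ∈ KSets n k ∧ ∃ E ∈ g, E ⊆ A
  up : ∀ E ∈ g, s ∈ E → ∀ x ∈ Iv s, x ∉ E.erase s → ∀ A ∈ KSets n k,
    insert x (E.erase s) ⊆ A → A ∈ F
  low : ∀ E ∈ g, ∀ A ∈ F, A ∩ Iv s ⊆ E → A ∩ Iv s = E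

lemma mk_setup {n k s i : ℕ} {F g : Finset (Finset ℕ)} (hLC : LeftCompressed n F)
    (hgen : IsGenSet n k F g)
    (hanti : ∀ E₁ ∈ g, ∀ E₂ ∈ g, E₁ ⊆ E₂ → E₁ = E₂)
    (hs : s = sPlus g) (hne : (gStar g s i).Nonempty) : Setup n k s F g := by
  obtain ⟨E0, hE0⟩ := hne
  simp only [gStar, mem_filter] at hE0
  have hs0 := (hgen.1 E0 hE0.1).1 hE0.2.1
  simp only [Iv, mem_Icc] at hs0
  have hsub : ∀ E ∈ g, E ⊆ Iv s := by
    intro E hE x hx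
    have h1 := (hgen.1 E hE).1 hx
    simp only [Iv, mem_Icc] at h1 ⊢
    refine ⟨h1.1, ?_⟩
    have h2 : x ≤ E.sup id := le_sup (f := id) hx
    have h3 : E.sup id ≤ sPlus g := le_sup (f := fun E : Finset ℕ => E.sup id) hE
    omega
  have hmem : ∀ A, A ∈ F ↔ A ∈ KSets n k ∧ ∃ E ∈ g, E ⊆ A := by
    intro A
    rw [← hgen.2, mem_filter]
  refine ⟨hs0.2, hs0.1, hsub, hmem, ?_, ?_⟩
  · intro E hE hsE x hx hxE A hA hsubA
    by_cases hsA : s ∈ A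
    · refine (hmem A).2 ⟨hA, E, hE, fun y hy => ?_⟩
      by_cases hys : y = s
      · exact hys ▸ hsA
      · exact hsubA (mem_insert_of_mem (mem_erase.2 ⟨hys, hy⟩))
    · have hxA : x ∈ A := hsubA (mem_insert_self _ _)
      have hxs : x ≠ s := fun h => hsA (h ▸ hxA)
      simp only [Iv, mem_Icc] at hx
      have hxE' : x ∉ E := fun h => hxE (mem_erase.2 ⟨hxs, h⟩)
      have hB : insert s (A.erase x) ∈ F := by
        refine (hmem _).2 ⟨?_, E, hE, fun y hy => ?_⟩
        · rw [KSets, mem_powersetCard] at hA ⊢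
          constructor
          · refine insert_subset (mem_Icc.2 hs0) ((erase_subset _ _).trans hA.1)
          · rw [card_insert_of_notMem (fun h => hsA (mem_of_mem_erase h)),
              card_erase_add_one hxA, hA.2]
        · by_cases hys : y = s
          · exact hys ▸ mem_insert_self _ _
          · refine mem_insert_of_mem (mem_erase.2 ⟨fun h => hxE' (h ▸ hy), ?_⟩)
            exact hsubA (mem_insert_of_mem (mem_erase.2 ⟨hys, hy⟩))
      have heq : insert x ((insert s (A.erase x)).erase s) = A := by
        rw [erase_insert (fun h => hsA (mem_of_mem_erase h)), insert_erase hxA]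
      by_contra hAF
      have hsh := hLC x s hx.1 (lt_of_le_of_ne hx.2 hxs) hs0.2
      apply hAF
      rw [← hsh, shiftFam, mem_image]
      refine ⟨_, hB, ?_⟩
      rw [shiftSet, heq, if_pos]
      refine ⟨mem_insert_self _ _, ?_, hAF⟩
      simp [hxs]
  · intro E hE A hA hAE
    obtain ⟨-, E', hE', hEA⟩ := (hmem A).1 hA
    have h1 : E' ⊆ A ∩ Iv s := subset_inter hEA (hsub E' hE')
    have h2 := hanti E' hE' E hE (h1.trans hAE)
    subst h2
    exact hAE.antisymm h1

lemma mem_F1 {n k s i j : ℕ} {F g : Finset (Finset ℕ)} (S : Setup n k s F g) (A : Finset ℕ) :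
    A ∈ (F ∪ Dcal n k ((gStar g s i).image fun E => E.erase s)) \ Dcal n k (gStar g s j) ↔
      (A ∈ F ∨ (A ∈ KSets n k ∧ ∃ E ∈ gStar g s i, A ∩ Iv s = E.erase s)) ∧
        ¬ (A ∈ KSets n k ∧ ∃ E ∈ gStar g s j, A ∩ Iv s = E) := by
  have hsup : ∀ E ∈ gStar g s j, E.sup id = s := by
    intro E hE
    simp only [gStar, mem_filter] at hE
    apply le_antisymm
    · refine Finset.sup_le fun x hx => ?_
      have := S.sub E hE.1 hx
      simp only [Iv, mem_Icc] at this
      exact this.2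
    · exact le_sup (f := id) hE.2.1
  rw [mem_sdiff, mem_union]
  have e2 : A ∈ Dcal n k (gStar g s j) ↔ (A ∈ KSets n k ∧ ∃ E ∈ gStar g s j, A ∩ Iv s = E) := by
    simp only [Dcal, mem_filter]
    refine and_congr_right fun _ => exists_congr fun E => and_congr_right fun hE => ?_
    rw [hsup E hE]
  rw [e2]
  refine and_congr_left fun _ => ?_
  simp only [Dcal, mem_filter, mem_image]
  constructor
  · rintro (h | ⟨hA, E', ⟨E, hE, rfl⟩, hEA⟩)
    · exact Or.inl h
    · by_cases hx : A ∩ Iv s = E.erase s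
      · exact Or.inr ⟨hA, E, hE, hx⟩
      · left
        simp only [gStar, mem_filter] at hE
        have hsub : E.erase s ⊆ A ∩ Iv s := by
          refine subset_inter ?_ ((erase_subset _ _).trans (S.sub E hE.1))
          rw [← hEA]
          exact inter_subset_left
        obtain ⟨x, hx1, hx2⟩ := exists_of_ssubset (hsub.ssubset_of_ne (Ne.symm hx))
        rw [mem_inter] at hx1
        refine S.up E hE.1 hE.2.1 x hx1.2 hx2 A hA ?_
        exact insert_subset hx1.1 (hsub.trans inter_subset_left)
  · rintro (h | ⟨hA, E, hE, hEA⟩)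
    · exact Or.inl h
    · right
      refine ⟨hA, _, ⟨E, hE, rfl⟩, ?_⟩
      have hle : (E.erase s).sup id ≤ s := by
        refine Finset.sup_le fun x hx => ?_
        rw [← hEA] at hx
        have := (mem_inter.1 hx).2
        simp only [Iv, mem_Icc] at this
        exact this.2
      apply Subset.antisymm
      · rw [← hEA]
        apply inter_subset_inter_left
        rw [hEA]
        exact Icc_subset_Icc le_rfl hle
      · intro x hx
        have hx' := hx
        rw [← hEA, mem_inter] at hx'
        rw [mem_inter]
        refine ⟨hx'.1, ?_⟩
        have h3 : x ≤ (E.erase s).sup id := le_sup (f := id) hx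
        simp only [Iv, mem_Icc] at hx' ⊢
        omega

lemma pair_eq_of_card {A B C D : Finset ℕ} {p : Finset ℕ → ℕ} {u v : ℕ} (huv : u ≠ v)
    (hA : p A = u) (hB : p B = v) (hC : p C = u) (hD : p D = v)
    (h : ({A, B} : Finset (Finset ℕ)) = {C, D}) : A = C ∧ B = D := by
  have h1 : A ∈ ({C, D} : Finset (Finset ℕ)) := h ▸ mem_insert_self _ _
  have h2 : B ∈ ({C, D} : Finset (Finset ℕ)) := h ▸ mem_insert_of_mem (mem_singleton_self _)
  simp only [mem_insert, mem_singleton] at h1 h2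
  constructor
  · rcases h1 with rfl | rfl
    · rfl
    · exact absurd (hA.symm.trans hD) huv
  · rcases h2 with rfl | rfl
    · exact absurd (hC.symm.trans hB) huv
    · rfl

lemma lower_bound {n k s i j : ℕ} {F g F₁ : Finset (Finset ℕ)} (S : Setup n k s F g)
    (hij : j ≠ i) (hik : i ≤ k) (hi : 1 ≤ i)
    (hF₁ : F₁ = (F ∪ Dcal n k ((gStar g s i).image fun E => E.erase s)) \
        Dcal n k (gStar g s j)) :
    (gStar g s i).card * (zset (k - i) ((Icc (s + 1) n).powersetCard (k - i + 1))).card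
      + (z2set (i - 1) s (gStar g s i) (F.image fun A => A ∩ Iv s)).card *
        ((Icc (s + 1) n).powersetCard (k - i + 1)).card
      + (gStar g s i).card * ((s + 1 - i) * (((Icc (s + 1) n).powersetCard (k - i + 1)).card *
         (k - i + 1)))
      ≤ (zset (k - 1) F₁ \ zset (k - 1) F).card := by
  set V := Icc (s + 1) n with hV
  set W := V.powersetCard (k - i + 1) with hW
  set G := gStar g s i with hG
  have hGm : ∀ E ∈ G, E ∈ g ∧ s ∈ E ∧ E.card = i := fun E hE => by
    simpa [hG, gStar] using hE
  have hWs : ∀ T ∈ W, T ⊆ V := fun T hT => (mem_powersetCard.1 hT).1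
  have hWc : ∀ T ∈ W, T.card = k - i + 1 := fun T hT => (mem_powersetCard.1 hT).2
  have hE's : ∀ E ∈ G, E.erase s ⊆ Iv s := fun E hE =>
    (erase_subset _ _).trans (S.sub E (hGm E hE).1)
  have hE'c : ∀ E ∈ G, (E.erase s).card = i - 1 := fun E hE => by
    rw [card_erase_of_mem (hGm E hE).2.1, (hGm E hE).2.2]
  have hsE : ∀ E ∈ G, insert s (E.erase s) = E := fun E hE => insert_erase (hGm E hE).2.1
  have eqA : ∀ E ∈ G, ∀ E2 ∈ G, E.erase s = E2.erase s → E = E2 := fun E hE E2 hE2 h => by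
    rw [← hsE E hE, ← hsE E2 hE2, h]
  -- new sets
  have hnew : ∀ E ∈ G, ∀ T ∈ W, E.erase s ∪ T ∈ KSets n k := fun E hE T hT =>
    union_mem_KSets S.sn (hE's E hE) hT (by rw [hE'c E hE]; omega)
  have hnewF : ∀ E ∈ G, ∀ T ∈ W, E.erase s ∪ T ∉ F := fun E hE T hT hF => by
    have h1 := tr_union (hE's E hE) (hWs T hT)
    have h2 := S.low E (hGm E hE).1 _ hF (by rw [h1]; exact erase_subset _ _)
    rw [h1] at h2
    have := (hGm E hE).2.1
    rw [← h2] at this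
    simp at this
  -- a set without `s`, or with the wrong trace size, is not removed
  have hnr : ∀ A : Finset ℕ, (s ∉ A ∨ (A ∩ Iv s).card = i) →
      ¬ (A ∈ KSets n k ∧ ∃ E ∈ gStar g s j, A ∩ Iv s = E) := by
    rintro A hA ⟨-, E, hE, rfl⟩
    simp only [gStar, mem_filter, mem_inter] at hE
    rcases hA with h | h
    · exact h hE.2.1.1
    · exact hij (hE.2.2.symm.trans h)
  have hsT : ∀ T ∈ W, s ∉ T := fun T hT h => by
    have := hWs T hT h
    simp only [hV, mem_Icc] at this
    omega
  have hnew1 : ∀ E ∈ G, ∀ T ∈ W, E.erase s ∪ T ∈ F₁ := fun E hE T hT => by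
    rw [hF₁, mem_F1 S]
    refine ⟨Or.inr ⟨hnew E hE T hT, E, hE, tr_union (hE's E hE) (hWs T hT)⟩, hnr _ (Or.inl ?_)⟩
    have := hsT T hT
    simp [this]
  have hnotF : ∀ P : Finset (Finset ℕ), ∀ E ∈ G, ∀ T ∈ W, E.erase s ∪ T ∈ P →
      P ∉ zset (k - 1) F := by
    intro P E hE T hT hP hz
    obtain ⟨A, hA, B, hB, -, -, rfl⟩ := mem_zset.1 hz
    simp only [mem_insert, mem_singleton] at hP
    rcases hP with h | h
    · exact hnewF E hE T hT (h ▸ hA)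
    · exact hnewF E hE T hT (h ▸ hB)
  -- traces
  let tr : Finset (Finset ℕ) → Finset (Finset ℕ) := fun P => P.image fun A => A ∩ Iv s
  let ct : Finset (Finset ℕ) → Finset (Finset ℕ) := fun P => P.image fun A => A \ Iv s
  -- X1
  let X1 := (G ×ˢ zset (k - i) W).image fun p => p.2.image fun T => p.1.erase s ∪ T
  have tr1 : ∀ E ∈ G, ∀ Q ∈ zset (k - i) W,
      tr (Q.image fun T => E.erase s ∪ T) = {E.erase s} ∧
      ct (Q.image fun T => E.erase s ∪ T) = Q := by
    intro E hE Q hQ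
    obtain ⟨A, hA, B, hB, -, -, rfl⟩ := mem_zset.1 hQ
    simp only [tr, ct, image_insert, image_singleton, tr_union (hE's E hE) (hWs A hA),
      tr_union (hE's E hE) (hWs B hB), ctr_union (hE's E hE) (hWs A hA),
      ctr_union (hE's E hE) (hWs B hB)]
    simp
  have c1 : X1.card = G.card * (zset (k - i) W).card := by
    rw [← card_product]
    apply card_image_of_injOn
    rintro ⟨E, Q⟩ h ⟨E2, Q2⟩ h2 he
    simp only [coe_product, Set.mem_prod, mem_coe] at h h2
    obtain ⟨a1, a2⟩ := tr1 E h.1 Q h.2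
    obtain ⟨b1, b2⟩ := tr1 E2 h2.1 Q2 h2.2
    dsimp only at he
    rw [he, b1, singleton_inj] at a1
    rw [he, b2] at a2
    rw [eqA E h.1 E2 h2.1 a1.symm, a2]
  have s1 : X1 ⊆ zset (k - 1) F₁ \ zset (k - 1) F := by
    intro P hP
    obtain ⟨⟨E, Q⟩, hp, rfl⟩ := mem_image.1 hP
    rw [mem_product] at hp
    obtain ⟨hE, hQ⟩ := hp
    dsimp only at hE hQ ⊢
    obtain ⟨A, hA, B, hB, hAB, hc, rfl⟩ := mem_zset.1 hQ
    refine mem_sdiff.2 ⟨mem_zset.2 ⟨_, hnew1 E hE A hA, _, hnew1 E hE B hB, ?_, ?_, ?_⟩,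
      hnotF _ E hE A hA ?_⟩
    · intro h
      apply hAB
      rw [← ctr_union (hE's E hE) (hWs A hA), h, ctr_union (hE's E hE) (hWs B hB)]
    · rw [inter_card (hE's E hE) (hWs A hA) (hE's E hE) (hWs B hB), inter_self, hE'c E hE, hc]
      omega
    · simp [image_insert]
    · simp [image_insert]
  -- X2
  let Z := z2set (i - 1) s G (F.image fun A => A ∩ Iv s)
  let X2 := (Z ×ˢ W).image fun p => p.1.image fun E => E.erase s ∪ p.2
  have hZ : ∀ Q ∈ Z, ∃ E ∈ G, ∃ H, H ∈ F.image (fun A => A ∩ Iv s) ∧ s ∈ H ∧ H.card = i ∧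
      (E ∩ H).card = i - 1 ∧ Q = {E, H} ∧ H ⊆ Iv s ∧ E.erase s ≠ H.erase s := by
    intro Q hQ
    obtain ⟨E, hE, H, hH, h1, h2, h3, h4, h5, rfl⟩ := mem_z2set.1 hQ
    refine ⟨E, hE, H, hH, h5, by omega, h3, rfl, ?_, ?_⟩
    · obtain ⟨A, -, rfl⟩ := mem_image.1 hH
      exact inter_subset_right
    · intro he
      have : E = H := by rw [← insert_erase h4, he, insert_erase h5]
      rw [← this, inter_self] at h3
      omega
  have tr2 : ∀ Q ∈ Z, ∀ T ∈ W,
      tr (Q.image fun E => E.erase s ∪ T) = Q.image (fun E => E.erase s) ∧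
      ct (Q.image fun E => E.erase s ∪ T) = {T} ∧
      (Q.image (fun E => E.erase s)).card = 2 ∧
      (Q.image (fun E => E.erase s)).image (fun E => insert s E) = Q := by
    intro Q hQ T hT
    obtain ⟨E, hE, H, hH, h1, h2, h3, rfl, h4, h5⟩ := hZ Q hQ
    have h4' : H.erase s ⊆ Iv s := (erase_subset _ _).trans h4
    simp only [tr, ct, image_insert, image_singleton, tr_union (hE's E hE) (hWs T hT),
      tr_union h4' (hWs T hT), ctr_union (hE's E hE) (hWs T hT),
      ctr_union h4' (hWs T hT), hsE E hE, insert_erase h1]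
    simp [card_pair h5]
  have c2 : X2.card = Z.card * W.card := by
    rw [← card_product]
    apply card_image_of_injOn
    rintro ⟨Q, T⟩ h ⟨Q2, T2⟩ h2 he
    simp only [coe_product, Set.mem_prod, mem_coe] at h h2
    obtain ⟨a1, a2, -, a3⟩ := tr2 Q h.1 T h.2
    obtain ⟨b1, b2, -, b3⟩ := tr2 Q2 h2.1 T2 h2.2
    dsimp only at he
    rw [he, b1] at a1
    rw [he, b2, singleton_inj] at a2
    rw [← a3, ← a1, b3, a2]
  have s2 : X2 ⊆ zset (k - 1) F₁ \ zset (k - 1) F := by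
    intro P hP
    obtain ⟨⟨Q, T⟩, hp, rfl⟩ := mem_image.1 hP
    rw [mem_product] at hp
    obtain ⟨hQ, hT⟩ := hp
    dsimp only at hQ hT ⊢
    obtain ⟨E, hE, H, hH, h1, h2, h3, rfl, h4, h5⟩ := hZ Q hQ
    have h4' : H.erase s ⊆ Iv s := (erase_subset _ _).trans h4
    have hHT : H.erase s ∪ T ∈ KSets n k :=
      union_mem_KSets S.sn h4' hT (by rw [card_erase_of_mem h1]; omega)
    have hHF : H.erase s ∪ T ∈ F₁ := by
      obtain ⟨A, hA, hAH⟩ := mem_image.1 hH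
      obtain ⟨hAK, E3, hE3, hE3A⟩ := (S.memF A).1 hA
      have hE3H : E3 ⊆ H := by
        rw [← hAH]
        exact subset_inter hE3A (S.sub E3 hE3)
      by_cases hEH : E3 = H
      · subst hEH
        refine hnew1 E3 ?_ T hT
        simp [hG, gStar, hE3, h1, h2]
      · rw [hF₁, mem_F1 S]
        refine ⟨Or.inl ?_, hnr _ (Or.inl ?_)⟩
        · by_cases hs3 : s ∈ E3
          · obtain ⟨x, hx1, hx2⟩ := exists_of_ssubset (hE3H.ssubset_of_ne hEH)
            have hxs : x ≠ s := fun h => hx2 (h ▸ hs3)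
            refine S.up E3 hE3 hs3 x (h4 hx1) (fun h => hx2 (mem_of_mem_erase h)) _ hHT ?_
            refine insert_subset (mem_union_left _ (mem_erase.2 ⟨hxs, hx1⟩)) ?_
            exact (erase_subset_erase s hE3H).trans subset_union_left
          · refine (S.memF _).2 ⟨hHT, E3, hE3, fun y hy => mem_union_left _ (mem_erase.2 ⟨?_, hE3H hy⟩)⟩
            rintro rfl
            exact hs3 hy
        · have := hsT T hT
          simp [this]
    refine mem_sdiff.2 ⟨mem_zset.2 ⟨_, hnew1 E hE T hT, _, hHF, ?_, ?_, ?_⟩,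
      hnotF _ E hE T hT ?_⟩
    · intro h
      apply h5
      rw [← tr_union (hE's E hE) (hWs T hT), h, tr_union h4' (hWs T hT)]
    · rw [inter_card (hE's E hE) (hWs T hT) h4' (hWs T hT), inter_self, hWc T hT]
      have : E.erase s ∩ H.erase s = (E ∩ H).erase s := by
        ext x
        simp only [mem_inter, mem_erase]
        tauto
      have hp : 0 < (E ∩ H).card := card_pos.2 ⟨s, mem_inter.2 ⟨(hGm E hE).2.1, h1⟩⟩
      rw [this, card_erase_of_mem (mem_inter.2 ⟨(hGm E hE).2.1, h1⟩)]
      omega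
    · simp [image_insert]
    · simp [image_insert]
  -- X3
  let D3 := G.sigma fun E => (Iv s \ E.erase s) ×ˢ (W.sigma fun T => T)
  let X3 : Finset (Finset (Finset ℕ)) := D3.image fun p =>
    {p.1.erase s ∪ p.2.2.1, insert p.2.1 (p.1.erase s) ∪ p.2.2.1.erase p.2.2.2}
  have hD3 : ∀ p ∈ D3, p.1 ∈ G ∧ p.2.1 ∈ Iv s ∧ p.2.1 ∉ p.1.erase s ∧ p.2.2.1 ∈ W ∧
      p.2.2.2 ∈ p.2.2.1 := by
    rintro ⟨E, x, T, y⟩ hp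
    simp only [D3, mem_sigma, mem_product, mem_sdiff] at hp
    exact ⟨hp.1, hp.2.1.1, hp.2.1.2, hp.2.2.1, hp.2.2.2⟩
  have tr3 : ∀ p ∈ D3,
      (p.1.erase s ∪ p.2.2.1) ∩ Iv s = p.1.erase s ∧ (p.1.erase s ∪ p.2.2.1) \ Iv s = p.2.2.1 ∧
      (insert p.2.1 (p.1.erase s) ∪ p.2.2.1.erase p.2.2.2) ∩ Iv s = insert p.2.1 (p.1.erase s) ∧
      (insert p.2.1 (p.1.erase s) ∪ p.2.2.1.erase p.2.2.2) \ Iv s = p.2.2.1.erase p.2.2.2 ∧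
      (insert p.2.1 (p.1.erase s)).card = i := by
    rintro ⟨E, x, T, y⟩ hp
    obtain ⟨h1, h2, h3, h4, h5⟩ := hD3 _ hp
    dsimp only at *
    have a1 : insert x (E.erase s) ⊆ Iv s := insert_subset h2 (hE's E h1)
    have a2 : T.erase y ⊆ V := (erase_subset _ _).trans (hWs T h4)
    refine ⟨tr_union (hE's E h1) (hWs T h4), ctr_union (hE's E h1) (hWs T h4),
      tr_union a1 a2, ctr_union a1 a2, ?_⟩
    rw [card_insert_of_notMem h3, hE'c E h1]
    omega
  have c3 : X3.card = G.card * ((s + 1 - i) * (W.card * (k - i + 1))) := by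
    have : D3.card = G.card * ((s + 1 - i) * (W.card * (k - i + 1))) := by
      rw [card_sigma]
      have h1 : (W.sigma fun T => T).card = W.card * (k - i + 1) := by
        rw [card_sigma, sum_congr rfl hWc, sum_const, smul_eq_mul]
      rw [sum_congr rfl (g := fun _ => (s + 1 - i) * (W.card * (k - i + 1))), sum_const,
        smul_eq_mul]
      intro E hE
      rw [card_product, h1, card_sdiff_of_subset (hE's E hE), hE'c E hE]
      congr 1
      simp [Iv]
      omega
    rw [← this]
    apply card_image_of_injOn
    intro p hp q hq he
    obtain ⟨a1, a2, a3, a4, a5⟩ := tr3 p hp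
    obtain ⟨b1, b2, b3, b4, b5⟩ := tr3 q hq
    obtain ⟨p1, p2, p3, p4, p5⟩ := hD3 p hp
    obtain ⟨q1, q2, q3, q4, q5⟩ := hD3 q hq
    obtain ⟨e1, e2⟩ := pair_eq_of_card (p := fun A => (A ∩ Iv s).card) (u := i - 1) (v := i)
      (by omega) (by simp only [a1, hE'c _ p1]) (by simp only [a3, a5])
      (by simp only [b1, hE'c _ q1]) (by simp only [b3, b5]) he
    rw [e1, b1] at a1
    rw [e1, b2] at a2
    rw [e2, b3] at a3
    rw [e2, b4] at a4
    obtain ⟨E, x, T, y⟩ := p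
    obtain ⟨E2, x2, T2, y2⟩ := q
    dsimp only at *
    have r1 := eqA E2 q1 E p1 a1
    subst r1
    subst a2
    have r2 : x = x2 := by
      have : x2 ∈ insert x (E2.erase s) := a3 ▸ mem_insert_self _ _
      rcases mem_insert.1 this with h | h
      · exact h.symm
      · exact absurd h q3
    subst r2
    have r3 : y = y2 := by
      by_contra hne
      have : y ∈ T2.erase y2 := mem_erase.2 ⟨hne, p5⟩
      rw [a4] at this
      simp at this
    subst r3
    rfl
  have s3 : X3 ⊆ zset (k - 1) F₁ \ zset (k - 1) F := by
    intro P hP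
    obtain ⟨p, hp, rfl⟩ := mem_image.1 hP
    obtain ⟨a1, a2, a3, a4, a5⟩ := tr3 p hp
    obtain ⟨E, x, T, y⟩ := p
    obtain ⟨h1, h2, h3, h4, h5⟩ := hD3 _ hp
    dsimp only at *
    have g1 : insert x (E.erase s) ⊆ Iv s := insert_subset h2 (hE's E h1)
    have g2 : T.erase y ⊆ V := (erase_subset _ _).trans (hWs T h4)
    have g3 : T.erase y ∈ V.powersetCard (k - i) := by
      rw [mem_powersetCard, card_erase_of_mem h5, hWc T h4]
      exact ⟨g2, by omega⟩
    have hK : insert x (E.erase s) ∪ T.erase y ∈ KSets n k :=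
      union_mem_KSets S.sn g1 g3 (by omega)
    have hN : insert x (E.erase s) ∪ T.erase y ∈ F₁ := by
      rw [hF₁, mem_F1 S]
      refine ⟨Or.inl ?_, hnr _ (Or.inr (by rw [a3, a5]))⟩
      exact S.up E (hGm E h1).1 (hGm E h1).2.1 x h2 h3 _ hK subset_union_left
    refine mem_sdiff.2 ⟨mem_zset.2 ⟨_, hnew1 E h1 T h4, _, hN, ?_, ?_, rfl⟩,
      hnotF _ E h1 T h4 (mem_insert_self _ _)⟩
    · intro h
      rw [h, a3] at a1
      exact h3 (a1 ▸ mem_insert_self _ _)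
    · rw [inter_card (hE's E h1) (hWs T h4) g1 g2, inter_eq_left.2 (subset_insert _ _),
        inter_eq_right.2 (erase_subset _ _), hE'c E h1, card_erase_of_mem h5, hWc T h4]
      omega
  -- disjointness
  have t1 : ∀ P ∈ X1, (tr P).card = 1 := by
    intro P hP
    obtain ⟨⟨E, Q⟩, hp, rfl⟩ := mem_image.1 hP
    rw [mem_product] at hp
    dsimp only at hp ⊢
    rw [(tr1 E hp.1 Q hp.2).1, card_singleton]
  have t2 : ∀ P ∈ X2, (tr P).card = 2 ∧ (ct P).card = 1 := by
    intro P hP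
    obtain ⟨⟨Q, T⟩, hp, rfl⟩ := mem_image.1 hP
    rw [mem_product] at hp
    dsimp only at hp ⊢
    obtain ⟨a, b, c, -⟩ := tr2 Q hp.1 T hp.2
    rw [a, b, c, card_singleton]
    exact ⟨rfl, rfl⟩
  have t3 : ∀ P ∈ X3, (tr P).card = 2 ∧ (ct P).card = 2 := by
    intro P hP
    obtain ⟨p, hp, rfl⟩ := mem_image.1 hP
    obtain ⟨a1, a2, a3, a4, a5⟩ := tr3 p hp
    obtain ⟨h1, h2, h3, h4, h5⟩ := hD3 _ hp
    simp only [tr, ct, image_insert, image_singleton, a1, a2, a3, a4]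
    constructor
    · apply card_pair
      intro h
      exact h3 (h ▸ mem_insert_self _ _)
    · apply card_pair
      intro h
      rw [h] at h5
      simp at h5
  have d12 : Disjoint X1 X2 := Finset.disjoint_left.2 fun P h1 h2 => by
    have := t1 P h1
    have := t2 P h2
    omega
  have d3 : Disjoint (X1 ∪ X2) X3 := Finset.disjoint_left.2 fun P h1 h2 => by
    have h3 := t3 P h2
    rcases mem_union.1 h1 with h | h
    · have := t1 P h
      omega
    · have := t2 P h
      omega
  have hfin := card_le_card (union_subset (union_subset s1 s2) s3)
  rw [card_union_of_disjoint d3, card_union_of_disjoint d12, c1, c2, c3] at hfin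
  exact hfin

lemma upper_bound {n k s i j : ℕ} {F g F₁ : Finset (Finset ℕ)} (S : Setup n k s F g)
    (hjk : j ≤ k)
    (hF₁ : F₁ = (F ∪ Dcal n k ((gStar g s i).image fun E => E.erase s)) \
        Dcal n k (gStar g s j)) :
    (zset (k - 1) F \ zset (k - 1) F₁).card ≤
    (gStar g s j).card * (zset (k - j - 1) ((Icc (s + 1) n).powersetCard (k - j))).card
      + (z2set (j - 1) s (gStar g s j) (F.image fun A => A ∩ Iv s)).card *
        ((Icc (s + 1) n).powersetCard (k - j)).card
      + (gStar g s j).card * ((s - j) * ((Icc (s + 1) n).powersetCard (k - j)).card)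
      + (gStar g s j).card * ((s - j) * (((Icc (s + 1) n).powersetCard (k - j)).card *
         (k - j))) := by
  set V := Icc (s + 1) n with hV
  set W := V.powersetCard (k - j) with hW
  set G := gStar g s j with hG
  have hGm : ∀ E ∈ G, E ∈ g ∧ s ∈ E ∧ E.card = j := fun E hE => by
    simpa [hG, gStar] using hE
  have hWc : ∀ T ∈ W, T.card = k - j := fun T hT => (mem_powersetCard.1 hT).2
  let Z := z2set (j - 1) s G (F.image fun A => A ∩ Iv s)
  let Y1 := (G ×ˢ zset (k - j - 1) W).image fun p => p.2.image fun T => p.1 ∪ T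
  let Y2 := (Z ×ˢ W).image fun p => p.1.image fun E => E ∪ p.2
  let D3 := G.sigma fun E => (Iv s \ E) ×ˢ W
  let Y3 : Finset (Finset (Finset ℕ)) := D3.image fun p =>
    {p.1 ∪ p.2.2, insert p.2.1 ((p.1 ∪ p.2.2).erase s)}
  let D4 := G.sigma fun E => (Iv s \ E) ×ˢ (W.sigma fun T => T)
  let Y4 : Finset (Finset (Finset ℕ)) := D4.image fun p =>
    {p.1 ∪ p.2.2.1, insert p.2.1 ((p.1 ∪ p.2.2.1).erase p.2.2.2)}
  have hcs : ∀ E ∈ G, (Iv s \ E).card = s - j := by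
    intro E hE
    rw [card_sdiff_of_subset (S.sub E (hGm E hE).1), (hGm E hE).2.2]
    simp [Iv]
  have c1 : Y1.card ≤ G.card * (zset (k - j - 1) W).card :=
    card_image_le.trans (card_product _ _).le
  have c2 : Y2.card ≤ Z.card * W.card := card_image_le.trans (card_product _ _).le
  have c3 : Y3.card ≤ G.card * ((s - j) * W.card) := by
    refine card_image_le.trans (le_of_eq ?_)
    rw [card_sigma, sum_congr rfl (g := fun _ => (s - j) * W.card), sum_const, smul_eq_mul]
    intro E hE
    rw [card_product, hcs E hE]
  have c4 : Y4.card ≤ G.card * ((s - j) * (W.card * (k - j))) := by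
    refine card_image_le.trans (le_of_eq ?_)
    rw [card_sigma, sum_congr rfl (g := fun _ => (s - j) * (W.card * (k - j))), sum_const,
      smul_eq_mul]
    intro E hE
    rw [card_product, hcs E hE, card_sigma, sum_congr rfl hWc, sum_const, smul_eq_mul]
  have main : ∀ A ∈ F, ∀ B ∈ F, A ≠ B → (A ∩ B).card = k - 1 → A ∉ F₁ →
      ({A, B} : Finset (Finset ℕ)) ∈ Y1 ∪ Y2 ∪ Y3 ∪ Y4 := by
    intro A hA B hB hAB hc hA1
    have hAK := ((S.memF A).1 hA).1
    have hBK := ((S.memF B).1 hB).1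
    have hE : A ∩ Iv s ∈ G := by
      rw [hF₁, mem_F1 S] at hA1
      simp only [hA, true_or, true_and, not_not] at hA1
      obtain ⟨-, E, hE, rfl⟩ := hA1
      exact hE
    obtain ⟨hEg, hsE, hEj⟩ := hGm _ hE
    obtain ⟨uA, eA, kA⟩ := split_KSets (s := s) hAK
    obtain ⟨uB, eB, kB⟩ := split_KSets (s := s) hBK
    have hTW : A \ Iv s ∈ W := mem_powersetCard.2 ⟨uA, by omega⟩
    obtain ⟨a, b, ha, ha', hb, hb', hBe, hi⟩ := exists_swap_elt
      (mem_powersetCard.1 hAK).2 (mem_powersetCard.1 hBK).2 hAB hc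
    have hsA : s ∈ A := (mem_inter.1 hsE).1
    have hsI : s ∈ Iv s := (mem_inter.1 hsE).2
    by_cases has : a ∈ Iv s <;> by_cases hbs : b ∈ Iv s
    · have hTT : B \ Iv s = A \ Iv s := by
        rw [hBe]
        ext x
        simp only [mem_sdiff, mem_insert, mem_erase]
        grind
      by_cases hasx : a = s
      · -- Y3
        subst hasx
        refine mem_union_left _ (mem_union_right _ ?_)
        refine mem_image.2 ⟨⟨A ∩ Iv a, b, A \ Iv a⟩, ?_, ?_⟩
        · simp only [D3, mem_sigma, mem_product]
          exact ⟨hE, mem_sdiff.2 ⟨hbs, fun h => hb' (mem_inter.1 h).1⟩, hTW⟩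
        · dsimp only
          rw [← eA, ← hBe]
      · -- Y2
        refine mem_union_left _ (mem_union_left _ (mem_union_right _ ?_))
        have hEE : B ∩ Iv s = insert b ((A ∩ Iv s).erase a) := by
          rw [hBe]
          ext x
          simp only [mem_inter, mem_insert, mem_erase]
          grind
        have hj1 : 0 < j := hEj ▸ card_pos.2 ⟨s, hsE⟩
        refine mem_image.2 ⟨({A ∩ Iv s, B ∩ Iv s}, A \ Iv s), ?_, ?_⟩
        · rw [mem_product]
          refine ⟨mem_z2set.2 ⟨_, hE, B ∩ Iv s, mem_image_of_mem _ hB, ?_, ?_, ?_, hsE, ?_, rfl⟩,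
            hTW⟩
          · omega
          · rw [hTT] at kB
            omega
          · have : (A ∩ Iv s) ∩ (B ∩ Iv s) = (A ∩ Iv s).erase a := by
              rw [hEE]
              ext x
              simp only [mem_inter, mem_insert, mem_erase]
              grind
            rw [this, card_erase_of_mem (mem_inter.2 ⟨ha, has⟩), hEj]
          · rw [hEE]
            exact mem_insert_of_mem (mem_erase.2 ⟨Ne.symm hasx, hsE⟩)
        · dsimp only
          rw [image_insert, image_singleton, ← eA]
          rw [← hTT]
          rw [← eB]
    · exfalso
      have hEE : B ∩ Iv s = (A ∩ Iv s).erase a := by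
        rw [hBe]
        ext x
        simp only [mem_inter, mem_insert, mem_erase]
        grind
      have h := S.low _ hEg B hB (by rw [hEE]; exact erase_subset _ _)
      have : a ∈ B ∩ Iv s := h ▸ mem_inter.2 ⟨ha, has⟩
      exact ha' (mem_inter.1 this).1
    · -- Y4
      refine mem_union_right _ ?_
      refine mem_image.2 ⟨⟨A ∩ Iv s, b, A \ Iv s, a⟩, ?_, ?_⟩
      · simp only [D4, mem_sigma, mem_product]
        exact ⟨hE, mem_sdiff.2 ⟨hbs, fun h => hb' (mem_inter.1 h).1⟩, hTW,
          mem_sdiff.2 ⟨ha, has⟩⟩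
      · dsimp only
        rw [← eA, ← hBe]
    · -- Y1
      refine mem_union_left _ (mem_union_left _ (mem_union_left _ ?_))
      have hEE : B ∩ Iv s = A ∩ Iv s := by
        rw [hBe]
        ext x
        simp only [mem_inter, mem_insert, mem_erase]
        grind
      have hTT : (A \ Iv s) ∩ (B \ Iv s) = (A \ Iv s).erase a := by
        rw [hBe]
        ext x
        simp only [mem_inter, mem_sdiff, mem_insert, mem_erase]
        grind
      rw [hEE] at kB
      refine mem_image.2 ⟨(A ∩ Iv s, {A \ Iv s, B \ Iv s}), ?_, ?_⟩
      · rw [mem_product]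
        refine ⟨hE, mem_zset.2 ⟨_, hTW, B \ Iv s, mem_powersetCard.2 ⟨uB, by omega⟩, ?_, ?_, rfl⟩⟩
        · intro h
          have : a ∈ B \ Iv s := h ▸ mem_sdiff.2 ⟨ha, has⟩
          exact ha' (mem_sdiff.1 this).1
        · rw [hTT, card_erase_of_mem (mem_sdiff.2 ⟨ha, has⟩)]
          omega
      · dsimp only
        rw [image_insert, image_singleton, ← eA]
        rw [← hEE]
        rw [← eB]
  have hsub : zset (k - 1) F \ zset (k - 1) F₁ ⊆ Y1 ∪ Y2 ∪ Y3 ∪ Y4 := by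
    intro P hP
    obtain ⟨h1, h2⟩ := mem_sdiff.1 hP
    obtain ⟨A, hA, B, hB, hAB, hc, rfl⟩ := mem_zset.1 h1
    by_cases hA1 : A ∈ F₁
    · have hB1 : B ∉ F₁ := fun hB1 => h2 (mem_zset.2 ⟨A, hA1, B, hB1, hAB, hc, rfl⟩)
      rw [pair_comm]
      exact main B hB A hA hAB.symm (by rw [inter_comm]; exact hc) hB1
    · exact main A hA B hB hAB hc hA1
  refine (card_le_card hsub).trans ?_
  have u1 := card_union_le (Y1 ∪ Y2 ∪ Y3) Y4
  have u2 := card_union_le (Y1 ∪ Y2) Y3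
  have u3 := card_union_le Y1 Y2
  change _ ≤ _ + Z.card * W.card + _ + _
  omega

/-- **Key counting lemma for the generating set method (Lemma 3.2).** -/
theorem stmt_7 (n k t i j s : ℕ) (ht : 0 < t) (hk : 0 < k) (hkn : k ≤ n)
    (F g : Finset (Finset ℕ)) (hF : F ⊆ KSets n k)
    (hint : IntersectingT t F) (hLC : LeftCompressed n F)
    (hgen : IsGenSet n k F g)
    (hanti : ∀ E₁ ∈ g, ∀ E₂ ∈ g, E₁ ⊆ E₂ → E₁ = E₂)
    (hs : s = sPlus g)
    (hsmin : ∀ g' : Finset (Finset ℕ), IsGenSet n k F g' → s ≤ sPlus g')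
    (hne : (gStar g s i).Nonempty)
    (hj : (j : ℤ) = (s : ℤ) + t - i) (hij : j ≠ i)
    (F₁ : Finset (Finset ℕ))
    (hF₁ : F₁ = (F ∪ Dcal n k ((gStar g s i).image fun E => E.erase s)) \
        Dcal n k (gStar g s j)) :
    ((gStar g s i).card : ℤ) * ichoose ((n : ℤ) - s) ((k : ℤ) - i) *
        ichoose ((n : ℤ) - s - k + i) 2
      + (zeta2v (i - 1) s (gStar g s i) (F.image fun A => A ∩ Iv s) : ℤ) *
        ichoose ((n : ℤ) - s) ((k : ℤ) - i + 1)
      + ((gStar g s i).card : ℤ) * ((s : ℤ) - i + 1) * ((k : ℤ) - i + 1) *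
        ichoose ((n : ℤ) - s) ((k : ℤ) - i + 1)
      - ((gStar g s j).card : ℤ) * ichoose ((n : ℤ) - s) ((k : ℤ) - j - 1) *
        ichoose ((n : ℤ) - s - k + j + 1) 2
      - (zeta2v (j - 1) s (gStar g s j) (F.image fun A => A ∩ Iv s) : ℤ) *
        ichoose ((n : ℤ) - s) ((k : ℤ) - j)
      - ((gStar g s j).card : ℤ) * ((s : ℤ) - j) * ((k : ℤ) - j + 1) *
        ichoose ((n : ℤ) - s) ((k : ℤ) - j)
      ≤ (zeta (k - 1) F₁ : ℤ) - (zeta (k - 1) F : ℤ) := by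

  have S := mk_setup hLC hgen hanti hs hne
  obtain ⟨E0, hE0⟩ := hne
  simp only [gStar, mem_filter] at hE0
  have hik : i ≤ k := hE0.2.2 ▸ (hgen.1 E0 hE0.1).2
  have hi : 1 ≤ i := hE0.2.2 ▸ card_pos.2 ⟨s, hE0.2.1⟩
  have his : i ≤ s := by
    have := card_le_card (S.sub E0 hE0.1)
    simp only [Iv, Nat.card_Icc] at this
    omega
  have hVc : ((Icc (s + 1) n).card : ℤ) = (n : ℤ) - s := by
    rw [Nat.card_Icc]
    have := S.sn
    omega
  have hVn : (((n - s : ℕ)) : ℤ) = (n : ℤ) - s := by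
    have := S.sn
    omega
  have hWcard : ∀ m : ℕ, (((Icc (s + 1) n).powersetCard m).card : ℤ) = ichoose ((n : ℤ) - s) m := by
    intro m
    rw [card_powersetCard, ← hVc, ichoose_nat]
  have hz : ∀ H, zeta (k - 1) H = (zset (k - 1) H).card := fun _ => rfl
  have hz2 : ∀ u H H', zeta2v u s H H' = (z2set u s H H').card := fun _ _ _ => rfl
  have hdiff : ((zset (k - 1) F₁).card : ℤ) - (zset (k - 1) F).card =
      ((zset (k - 1) F₁ \ zset (k - 1) F).card : ℤ) - (zset (k - 1) F \ zset (k - 1) F₁).card := by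
    have h1 := card_sdiff_add_card_inter (zset (k - 1) F₁) (zset (k - 1) F)
    have h2 := card_sdiff_add_card_inter (zset (k - 1) F) (zset (k - 1) F₁)
    rw [inter_comm] at h2
    omega
  have hL := lower_bound S hij hik hi hF₁
  have e1 := card_zset_powersetCard' (Icc (s + 1) n) (k - i + 1)
  zify at hL
  rw [Nat.add_sub_cancel] at e1
  rw [e1, hWcard, hVc] at hL
  push_cast [hik, show i ≤ s + 1 by omega] at hL
  rw [hz, hz, hdiff, hz2, hz2]
  rw [show (k : ℤ) - i + 1 - 1 = k - i by ring,
    show (n : ℤ) - s - (k - i + 1) + 1 = n - s - k + i by ring] at hL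
  have hU : ((zset (k - 1) F \ zset (k - 1) F₁).card : ℤ) ≤
      ((gStar g s j).card : ℤ) * ichoose ((n : ℤ) - s) ((k : ℤ) - j - 1) *
        ichoose ((n : ℤ) - s - k + j + 1) 2
      + ((z2set (j - 1) s (gStar g s j) (F.image fun A => A ∩ Iv s)).card : ℤ) *
        ichoose ((n : ℤ) - s) ((k : ℤ) - j)
      + ((gStar g s j).card : ℤ) * ((s : ℤ) - j) * ((k : ℤ) - j + 1) *
        ichoose ((n : ℤ) - s) ((k : ℤ) - j) := by
    rcases (gStar g s j).eq_empty_or_nonempty with h0 | ⟨E1, hE1⟩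
    · have hsub : zset (k - 1) F \ zset (k - 1) F₁ = ∅ := by
        rw [sdiff_eq_empty_iff_subset]
        intro P hP
        obtain ⟨A, hA, B, hB, hAB, hc, rfl⟩ := mem_zset.1 hP
        have hFF : ∀ A ∈ F, A ∈ F₁ := by
          intro A hA
          rw [hF₁, mem_F1 S]
          refine ⟨Or.inl hA, ?_⟩
          rintro ⟨-, E, hE, -⟩
          rw [h0] at hE
          exact notMem_empty _ hE
        exact mem_zset.2 ⟨A, hFF A hA, B, hFF B hB, hAB, hc, rfl⟩
      have hz0 : ∀ H, z2set (j - 1) s ∅ H = ∅ := by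
        intro H
        simp [z2set]
      rw [hsub, h0, hz0]
      simp
    · simp only [gStar, mem_filter] at hE1
      have hjk : j ≤ k := hE1.2.2 ▸ (hgen.1 E1 hE1.1).2
      have hjs : j ≤ s := by
        have := card_le_card (S.sub E1 hE1.1)
        simp only [Iv, Nat.card_Icc] at this
        omega
      have hU := upper_bound S hjk hF₁
      have e2 := card_zset_powersetCard' (Icc (s + 1) n) (k - j)
      zify at hU
      rw [e2, hWcard, hVc] at hU
      push_cast [hjk, hjs] at hU
      rw [show (n : ℤ) - s - (k - j) + 1 = n - s - k + j + 1 by ring] at hU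
      refine hU.trans (le_of_eq ?_)
      ring
  linarith
end

section
/- (t-intersecting Erdős–Ko–Rado theorem, with Wilson's sharp bound) Let t, k, n be positive integers with t ≤ k ≤ n and n ≥ (t+1)(k−t+1). If 𝓕 ⊆ C([n],k) is t-intersecting, then |𝓕| ≤ C(n−t, k−t). -/
open Finset

namespace WEKR

/-- every `k`-set containing `E` is in `F` -/
def Up (n k : ℕ) (F : Finset (Finset ℕ)) (E : Finset ℕ) : Prop :=
  ∀ B ∈ KSets n k, E ⊆ B → B ∈ F

/-- membership in `F` is determined (monotonically) by the trace on `[l]` -/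
def Det (n k : ℕ) (F : Finset (Finset ℕ)) (l : ℕ) : Prop :=
  ∀ A ∈ F, Up n k F (A ∩ Iv l)

def Shifted (F : Finset (Finset ℕ)) : Prop :=
  ∀ i j, 1 ≤ i → i < j → ∀ A ∈ F, j ∈ A → i ∉ A → insert i (A.erase j) ∈ F

lemma mem_KSets {n k : ℕ} {A : Finset ℕ} : A ∈ KSets n k ↔ A ⊆ Iv n ∧ A.card = k := by
  simp [KSets, mem_powersetCard]

lemma mem_Iv {n x : ℕ} : x ∈ Iv n ↔ 1 ≤ x ∧ x ≤ n := by simp [Iv]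

lemma card_Iv (n : ℕ) : (Iv n).card = n := by simp [Iv]

lemma Iv_mono {l n : ℕ} (h : l ≤ n) : Iv l ⊆ Iv n := by
  intro x hx; rw [mem_Iv] at *; omega

lemma swap_mem_KSets {n k i j : ℕ} {A : Finset ℕ} (hi : 1 ≤ i) (hij : i < j)
    (hA : A ∈ KSets n k) (hj : j ∈ A) (hiA : i ∉ A) : insert i (A.erase j) ∈ KSets n k := by
  rw [mem_KSets] at *
  refine ⟨?_, ?_⟩
  · intro x hx
    rw [mem_insert, mem_erase] at hx
    rcases hx with rfl | hx
    · have := mem_Iv.1 (hA.1 hj); rw [mem_Iv]; omega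
    · exact hA.1 hx.2
  · rw [card_insert_of_notMem (by simp [hiA]), card_erase_of_mem hj]
    have := card_pos.2 ⟨j, hj⟩
    omega

/-- counting sets with a prescribed trace -/
lemma card_trace {n k : ℕ} {S E : Finset ℕ} (hS : S ⊆ Iv n) (hE : E ⊆ S) (hk : E.card ≤ k) :
    ((KSets n k).filter fun A => A ∩ S = E).card = (n - S.card).choose (k - E.card) := by
  have h1 : ((Iv n \ S).powersetCard (k - E.card)).card = (n - S.card).choose (k - E.card) := by
    rw [card_powersetCard, card_sdiff_of_subset hS, card_Iv]
  rw [← h1]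
  apply card_bij' (fun A _ => A \ S) (fun B _ => B ∪ E)
  · intro A hA
    rw [mem_filter, mem_KSets] at hA
    rw [mem_powersetCard]
    refine ⟨sdiff_subset_sdiff hA.1.1 (le_refl _), ?_⟩
    have := card_sdiff_add_card_inter A S
    rw [hA.2] at this
    omega
  · intro B hB
    rw [mem_powersetCard] at hB
    rw [mem_filter, mem_KSets]
    have hd : Disjoint B S := disjoint_of_subset_left hB.1 sdiff_disjoint
    refine ⟨⟨union_subset (hB.1.trans sdiff_subset) (hE.trans hS), ?_⟩, ?_⟩
    · rw [card_union_of_disjoint (disjoint_of_subset_right hE hd)]; omega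
    · rw [union_inter_distrib_right, disjoint_iff_inter_eq_empty.1 hd, empty_union,
        inter_eq_left.2 hE]
  · intro A hA
    rw [mem_filter] at hA
    rw [← hA.2, sdiff_union_inter]
  · intro B hB
    rw [mem_powersetCard] at hB
    have hd : Disjoint B S := disjoint_of_subset_left hB.1 sdiff_disjoint
    rw [union_sdiff_distrib, sdiff_eq_empty_iff_subset.2 hE, union_empty, sdiff_eq_self_of_disjoint hd]

lemma card_traces {n k : ℕ} {S : Finset ℕ} (Z : Finset (Finset ℕ)) (hS : S ⊆ Iv n)
    (hZ : ∀ E ∈ Z, E ⊆ S ∧ E.card ≤ k) :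
    ((KSets n k).filter fun A => A ∩ S ∈ Z).card
      = ∑ E ∈ Z, (n - S.card).choose (k - E.card) := by
  rw [card_eq_sum_card_fiberwise (f := fun A => A ∩ S) (t := Z)]
  · apply sum_congr rfl
    intro E hE
    rw [← card_trace hS (hZ E hE).1 (hZ E hE).2, filter_filter]
    congr 1
    apply filter_congr
    intro A _
    constructor
    · exact fun h => h.2
    · intro h; exact ⟨h ▸ hE, h⟩
  · intro A hA
    simpa using (mem_filter.1 hA).2

lemma extend {n k t : ℕ} (hn : 2 * k + 1 ≤ n + t ∧ k ≤ n) (G : Finset ℕ) (hG : G ⊆ Iv n)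
    (hGk : G.card ≤ k) : ∀ (d : ℕ) (E : Finset ℕ), E ⊆ Iv n → E.card + d = k →
    (E ∩ G).card < t → ∃ B ∈ KSets n k, E ⊆ B ∧ (B ∩ G).card < t := by
  intro d
  induction d with
  | zero => intro E hE hd ht; exact ⟨E, mem_KSets.2 ⟨hE, by omega⟩, Subset.refl _, ht⟩
  | succ d ih =>
    intro E hE hd ht
    have hu := card_union_add_card_inter E G
    obtain ⟨x, hx, hxE, hxt⟩ : ∃ x ∈ Iv n, x ∉ E ∧ ((insert x E) ∩ G).card < t := by
      by_cases hc : E ∪ G = Iv n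
      · rw [hc, card_Iv] at hu
        obtain ⟨x, hx, hxE⟩ : ∃ x ∈ Iv n, x ∉ E := by
          apply exists_mem_notMem_of_card_lt_card
          rw [card_Iv]; omega
        refine ⟨x, hx, hxE, ?_⟩
        by_cases hxG : x ∈ G
        · rw [insert_inter_of_mem hxG]
          have := card_insert_le x (E ∩ G)
          omega
        · rw [insert_inter_of_notMem hxG]; exact ht
      · obtain ⟨x, hx, hxu⟩ := exists_of_ssubset ((union_subset hE hG).ssubset_of_ne hc)
        rw [mem_union, not_or] at hxu
        refine ⟨x, hx, hxu.1, ?_⟩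
        rw [insert_inter_of_notMem hxu.2]; exact ht
    obtain ⟨B, hB, hEB, hBt⟩ := ih (insert x E) (insert_subset hx hE)
      (by rw [card_insert_of_notMem hxE]; omega) hxt
    exact ⟨B, hB, (subset_insert _ _).trans hEB, hBt⟩

lemma up_inter {n k t : ℕ} (hn : 2 * k + 1 ≤ n + t ∧ k ≤ n) {F : Finset (Finset ℕ)}
    (hint : IntersectingT t F) {E G : Finset ℕ} (hE : E ⊆ Iv n) (hG : G ⊆ Iv n)
    (hEk : E.card ≤ k) (hGk : G.card ≤ k) (hEU : Up n k F E) (hGU : Up n k F G) :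
    t ≤ (E ∩ G).card := by
  by_contra! h
  obtain ⟨B, hB, hEB, hBt⟩ := extend hn G hG hGk (k - E.card) E hE (by omega) h
  rw [inter_comm] at hBt
  have hB' := mem_KSets.1 hB
  obtain ⟨C, hC, hGC, hCt⟩ := extend hn B hB'.1 hB'.2.le (k - G.card) G hG (by omega) hBt
  have := hint C (hGU C hC hGC) B (hEU B hB hEB)
  omega

lemma up_mono {n k : ℕ} {F : Finset (Finset ℕ)} {E G : Finset ℕ} (h : E ⊆ G)
    (hE : Up n k F E) : Up n k F G := fun B hB hGB => hE B hB (h.trans hGB)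

lemma up_shift {n k : ℕ} {F : Finset (Finset ℕ)} (hs : Shifted F) {E : Finset ℕ} {j l : ℕ}
    (hj : 1 ≤ j) (hjl : j < l) (hln : l ≤ n) (hjE : j ∉ E) (hE : Up n k F E) :
    Up n k F (insert j (E.erase l)) := by
  intro B hB hEB
  rw [insert_subset_iff] at hEB
  by_cases hl : l ∈ B
  · apply hE B hB
    intro x hx
    by_cases hxl : x = l
    · rw [hxl]; exact hl
    · exact hEB.2 (mem_erase.2 ⟨hxl, hx⟩)
  · have h1 : insert l (B.erase j) ∈ F := by
      apply hE
      · rw [mem_KSets] at *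
        refine ⟨insert_subset (mem_Iv.2 ⟨by omega, hln⟩) ((erase_subset _ _).trans hB.1), ?_⟩
        rw [card_insert_of_notMem (by simp [hl]), card_erase_of_mem hEB.1]
        have := card_pos.2 ⟨j, hEB.1⟩
        omega
      · intro x hx
        by_cases hxl : x = l
        · simp [hxl]
        · rw [mem_insert, mem_erase]
          exact Or.inr ⟨fun h => hjE (h ▸ hx), hEB.2 (mem_erase.2 ⟨hxl, hx⟩)⟩
    have h2 := hs j l hj hjl _ h1 (mem_insert_self _ _) (by simp; omega)
    rwa [erase_insert (by simp [hl]), insert_erase hEB.1] at h2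

open Classical in
noncomputable def MM (n k l : ℕ) (F : Finset (Finset ℕ)) : Finset (Finset ℕ) :=
  (Iv l).powerset.filter fun E => l ∈ E ∧ E.card ≤ k ∧ Up n k F E ∧ ¬ Up n k F (E.erase l)

lemma mem_MM {n k l : ℕ} {F : Finset (Finset ℕ)} {E : Finset ℕ} : E ∈ MM n k l F ↔
    E ⊆ Iv l ∧ l ∈ E ∧ E.card ≤ k ∧ Up n k F E ∧ ¬ Up n k F (E.erase l) := by
  simp [MM]

lemma MM_pos {n k l : ℕ} {F : Finset (Finset ℕ)} (hs : Shifted F) (hln : l ≤ n)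
    {E : Finset ℕ} (hE : E ∈ MM n k l F) : k + 1 - E.card ≤ n - l := by
  obtain ⟨hEl, hlE, hEk, hEU, hEn⟩ := mem_MM.1 hE
  unfold Up at hEn
  push Not at hEn
  obtain ⟨B, hB, hEB, hBF⟩ := hEn
  have hlB : l ∉ B := by
    intro h
    apply hBF
    apply hEU B hB
    rw [← insert_erase hlE]
    exact insert_subset h hEB
  have htr : B ∩ Iv l = E.erase l := by
    apply Subset.antisymm
    · intro x hx
      rw [mem_inter] at hx
      by_contra hxE
      have hxl : x ≠ l := fun h => hlB (h ▸ hx.1)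
      have hxE' : x ∉ E := fun h => hxE (mem_erase.2 ⟨hxl, h⟩)
      have hx2 := mem_Iv.1 hx.2
      exact hBF (up_shift hs hx2.1 (by omega) hln hxE' hEU B hB (insert_subset hx.1 hEB))
    · exact subset_inter hEB ((erase_subset _ _).trans hEl)
  have h1 := card_sdiff_add_card_inter B (Iv l)
  rw [htr, card_erase_of_mem hlE, (mem_KSets.1 hB).2] at h1
  have h2 : (B \ Iv l).card ≤ (Iv n \ Iv l).card :=
    card_le_card (sdiff_subset_sdiff (mem_KSets.1 hB).1 (le_refl _))
  rw [card_sdiff_of_subset (Iv_mono hln), card_Iv, card_Iv] at h2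
  have := card_pos.2 ⟨l, hlE⟩
  omega

lemma MM_inter_miss {n k t l : ℕ} (hn : 2 * k + 1 ≤ n + t ∧ k ≤ n) {F : Finset (Finset ℕ)}
    (hint : IntersectingT t F) (hs : Shifted F) (hln : l ≤ n) {E G : Finset ℕ}
    (hE : E ∈ MM n k l F) (hG : G ∈ MM n k l F) {j : ℕ} (hj : j ∈ Iv l) (hjE : j ∉ E)
    (hjG : j ∉ G) : t + 1 ≤ (E ∩ G).card := by
  obtain ⟨hEl, hlE, hEk, hEU, hEn⟩ := mem_MM.1 hE
  obtain ⟨hGl, hlG, hGk, hGU, hGn⟩ := mem_MM.1 hG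
  have hjl : j ≠ l := fun h => hjE (h ▸ hlE)
  have hj' := mem_Iv.1 hj
  have h1 := up_shift hs hj'.1 (by omega) hln hjE hEU
  have hc := card_pos.2 ⟨l, hlE⟩
  have h2 := up_inter hn hint (insert_subset (Iv_mono hln hj)
    ((erase_subset l E).trans (hEl.trans (Iv_mono hln)))) (hGl.trans (Iv_mono hln))
    (by rw [card_insert_of_notMem (by simp [hjE]), card_erase_of_mem hlE]; omega) hGk h1 hGU
  rw [insert_inter_of_notMem hjG, erase_inter,
    card_erase_of_mem (mem_inter.2 ⟨hlE, hlG⟩)] at h2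
  have := card_pos.2 ⟨l, mem_inter.2 ⟨hlE, hlG⟩⟩
  omega

lemma MM_inter_card {n k t l : ℕ} (hn : 2 * k + 1 ≤ n + t ∧ k ≤ n) {F : Finset (Finset ℕ)}
    (hint : IntersectingT t F) (hs : Shifted F) (hln : l ≤ n) {E G : Finset ℕ}
    (hE : E ∈ MM n k l F) (hG : G ∈ MM n k l F) (hne : E.card + G.card ≠ l + t) :
    t + 1 ≤ (E ∩ G).card := by
  obtain ⟨hEl, hlE, hEk, hEU, hEn⟩ := mem_MM.1 hE
  obtain ⟨hGl, hlG, hGk, hGU, hGn⟩ := mem_MM.1 hG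
  have h0 := up_inter hn hint (hEl.trans (Iv_mono hln)) (hGl.trans (Iv_mono hln)) hEk hGk hEU hGU
  have hu := card_union_add_card_inter E G
  by_cases hc : E ∪ G = Iv l
  · rw [hc, card_Iv] at hu; omega
  · obtain ⟨x, hx, hxu⟩ := exists_of_ssubset ((union_subset hEl hGl).ssubset_of_ne hc)
    rw [mem_union, not_or] at hxu
    exact MM_inter_miss hn hint hs hln hE hG hx hxu.1 hxu.2

lemma repl {n k t l : ℕ} (hn : 2 * k + 1 ≤ n + t ∧ k ≤ n) {F : Finset (Finset ℕ)}
    (hF : F ⊆ KSets n k) (hint : IntersectingT t F) (hln : l ≤ n)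
    (hdet : Det n k F l)
    (hmax : ∀ F' ⊆ KSets n k, IntersectingT t F' → F'.card ≤ F.card)
    (X Y : Finset (Finset ℕ)) (hX : X ⊆ MM n k l F) (hY : Y ⊆ MM n k l F)
    (hXY : ∀ E ∈ X, ∀ G ∈ MM n k l F, (G ∈ X ∨ G ∉ Y) → t + 1 ≤ (E ∩ G).card) :
    ∑ E ∈ X, (n - l).choose (k + 1 - E.card) ≤ ∑ E ∈ Y, (n - l).choose (k - E.card) := by
  set P := (KSets n k).filter fun A => A ∩ Iv l ∈ X.image (fun E => E.erase l) with hP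
  set Q := (KSets n k).filter fun A => A ∩ Iv l ∈ Y with hQ
  have hPc : P.card = ∑ E ∈ X, (n - l).choose (k + 1 - E.card) := by
    rw [hP, card_traces _ (Iv_mono hln), sum_image, card_Iv]
    · apply sum_congr rfl
      intro E hE
      have := (mem_MM.1 (hX hE)).2.1
      have h2 := card_pos.2 ⟨l, this⟩
      rw [card_erase_of_mem this]
      congr 1
      omega
    · intro E hE G hG h
      have h1 := (mem_MM.1 (hX hE)).2.1
      have h2 := (mem_MM.1 (hX hG)).2.1
      have h3 : E.erase l = G.erase l := h
      rw [← insert_erase h1, ← insert_erase h2, h3]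
    · intro E hE
      obtain ⟨G, hG, rfl⟩ := mem_image.1 hE
      obtain ⟨h1, h2, h3, -⟩ := mem_MM.1 (hX hG)
      exact ⟨(erase_subset _ _).trans h1, (card_le_card (erase_subset _ _)).trans h3⟩
  have hQc : Q.card = ∑ E ∈ Y, (n - l).choose (k - E.card) := by
    rw [hQ, card_traces _ (Iv_mono hln), card_Iv]
    intro E hE
    obtain ⟨h1, h2, h3, -⟩ := mem_MM.1 (hY hE)
    exact ⟨h1, h3⟩
  rw [← hPc, ← hQc]
  have hPF : Disjoint (F \ Q) P := by
    rw [disjoint_left]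
    intro A hA hAP
    obtain ⟨E, hE, hEA⟩ := mem_image.1 (mem_filter.1 hAP).2
    apply (mem_MM.1 (hX hE)).2.2.2.2
    have := hdet A (mem_sdiff.1 hA).1
    rwa [← hEA] at this
  have hXin : ∀ E ∈ X, ∀ A ∈ F, A ∉ Q → t ≤ (E.erase l ∩ (A ∩ Iv l)).card := by
    intro E hE A hA hAQ
    obtain ⟨hEl, hlE, hEk, hEU, hEn⟩ := mem_MM.1 (hX hE)
    have hAk := mem_KSets.1 (hF hA)
    have hAU := hdet A hA
    have hc : (A ∩ Iv l).card ≤ k := (card_le_card inter_subset_left).trans hAk.2.le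
    have hA1 : A ∩ Iv l ⊆ Iv l := inter_subset_right
    by_cases hG : A ∩ Iv l ∈ MM n k l F
    · have h1 := hXY E hE _ hG (Or.inr (fun h => hAQ (mem_filter.2 ⟨hF hA, h⟩)))
      rw [erase_inter]
      have := pred_card_le_card_erase (s := E ∩ (A ∩ Iv l)) (a := l)
      omega
    · have h2 : Up n k F ((A ∩ Iv l).erase l) := by
        by_cases hlA : l ∈ A ∩ Iv l
        · by_contra h
          exact hG (mem_MM.2 ⟨hA1, hlA, hc, hAU, h⟩)
        · rwa [erase_eq_of_notMem hlA]
      have h3 := up_inter hn hint (hEl.trans (Iv_mono hln))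
        ((erase_subset l _).trans (hA1.trans (Iv_mono hln))) hEk
        ((card_le_card (erase_subset _ _)).trans hc) hEU h2
      rwa [inter_erase, ← erase_inter] at h3
  have hPP : ∀ E ∈ X, ∀ G ∈ X, t ≤ (E.erase l ∩ G.erase l).card := by
    intro E hE G hG
    have h1 := hXY E hE G (hX hG) (Or.inl hG)
    have : E.erase l ∩ G.erase l = (E ∩ G).erase l := by
      ext x; simp; tauto
    rw [this]
    have := pred_card_le_card_erase (s := E ∩ G) (a := l)
    omega
  have hPA : ∀ A ∈ P, ∀ B ∈ F \ Q, t ≤ (A ∩ B).card := by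
    intro A hA B hB
    obtain ⟨E, hE, hEA⟩ := mem_image.1 (mem_filter.1 hA).2
    rw [mem_sdiff] at hB
    refine (hXin E hE B hB.1 hB.2).trans (card_le_card ?_)
    have hEA : E.erase l = A ∩ Iv l := hEA
    rw [hEA]
    exact inter_subset_inter inter_subset_left inter_subset_left
  have h1 := hmax ((F \ Q) ∪ P) (union_subset (sdiff_subset.trans hF) (filter_subset _ _)) (by
    intro A hA B hB
    rw [mem_union] at hA hB
    rcases hA with hA | hA <;> rcases hB with hB | hB
    · exact hint A (mem_sdiff.1 hA).1 B (mem_sdiff.1 hB).1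
    · rw [inter_comm]; exact hPA B hB A hA
    · exact hPA A hA B hB
    · obtain ⟨E, hE, hEA⟩ := mem_image.1 (mem_filter.1 hA).2
      obtain ⟨G, hG, hGB⟩ := mem_image.1 (mem_filter.1 hB).2
      have hEA : E.erase l = A ∩ Iv l := hEA
      have hGB : G.erase l = B ∩ Iv l := hGB
      refine (hPP E hE G hG).trans (card_le_card ?_)
      rw [hEA, hGB]
      exact inter_subset_inter inter_subset_left inter_subset_left)
  rw [card_union_of_disjoint hPF] at h1
  have h2 := le_card_sdiff Q F
  omega

lemma arith1 {N p q a b : ℕ} (ha : 0 < a) (hN : p + q + 2 ≤ N)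
    (h1 : a * N.choose (p + 1) ≤ b * N.choose q)
    (h2 : b * N.choose (q + 1) ≤ a * N.choose p) : False := by
  have e1 := Nat.choose_succ_right_eq N p
  have e2 := Nat.choose_succ_right_eq N q
  have hx : 0 < N.choose p := Nat.choose_pos (by omega)
  have f1 : N.choose p * (q + 2) ≤ N.choose (p + 1) * (p + 1) := by
    rw [e1]; exact Nat.mul_le_mul_left _ (by omega)
  have f2 : N.choose q * (p + 2) ≤ N.choose (q + 1) * (q + 1) := by
    rw [e2]; exact Nat.mul_le_mul_left _ (by omega)
  have g1 := Nat.mul_le_mul_left a f1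
  have g2 := Nat.mul_le_mul_left b f2
  have g3 := Nat.mul_le_mul_right (p + 1) h1
  have g4 := Nat.mul_le_mul_right (q + 1) h2
  have g5 : 0 < a * N.choose p := Nat.mul_pos ha hx
  nlinarith

lemma arith2 {t r p n : ℕ} (ht : 2 ≤ t) (hr : 2 ≤ r) (hn : (t + 1) * (r + p + 1) ≤ n) :
    (t + r - 1) * (p + 1) < r * (n - (t + 2 * r) - p) := by
  obtain ⟨s, rfl⟩ := Nat.exists_eq_add_of_le ht
  obtain ⟨u, rfl⟩ := Nat.exists_eq_add_of_le hr
  have h1 : (2 + s + 1) * (2 + u + p + 1) =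
      (2 + s) * (2 + u) + (2 + s) * p + (2 + s) + 2 + u + p + 1 := by ring
  have h2 : (2 + s) * (2 + u) + (2 + s) * p ≤ n - (2 + s + 2 * (2 + u)) - p + (2 + u) - 1 := by
    omega
  have h3 : (2 + s) * (2 + u) = 4 + 2 * s + 2 * u + s * u := by ring
  have h4 : 3 + 2 * s + u + s * u + (2 + s) * p ≤ n - (2 + s + 2 * (2 + u)) - p := by omega
  calc (2 + s + (2 + u) - 1) * (p + 1) = (3 + s + u) * (p + 1) := by congr 1; omega
    _ < (2 + u) * (3 + 2 * s + u + s * u + (2 + s) * p) := by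
      nlinarith [Nat.zero_le (s * u), Nat.zero_le (s * u * p), Nat.zero_le (s * p),
        Nat.zero_le (u * p), Nat.zero_le (s * u * u), Nat.zero_le (u * u)]
    _ ≤ _ := Nat.mul_le_mul_left _ h4

lemma MM_mid {n k t l : ℕ} (hn : 2 * k + 2 ≤ n + t ∧ k ≤ n) {F : Finset (Finset ℕ)}
    (hF : F ⊆ KSets n k) (hint : IntersectingT t F) (hs : Shifted F) (hln : l ≤ n)
    (hdet : Det n k F l)
    (hmax : ∀ F' ⊆ KSets n k, IntersectingT t F' → F'.card ≤ F.card)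
    {E : Finset ℕ} (hE : E ∈ MM n k l F) : 2 * E.card = l + t := by
  have hn' : 2 * k + 1 ≤ n + t ∧ k ≤ n := ⟨by omega, hn.2⟩
  by_contra hne
  have key : ∀ i i', i + i' = l + t → i ≠ i' →
      ((MM n k l F).filter fun E => E.card = i).card * (n - l).choose (k + 1 - i) ≤
      ((MM n k l F).filter fun E => E.card = i').card * (n - l).choose (k - i') := by
    intro i i' hii hne
    have := repl hn' hF hint hln hdet hmax ((MM n k l F).filter fun E => E.card = i)
      ((MM n k l F).filter fun E => E.card = i') (filter_subset _ _) (filter_subset _ _) (by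
        intro E hE G hG h
        rw [mem_filter] at hE
        apply MM_inter_card hn' hint hs hln hE.1 hG
        rcases h with h | h
        · rw [mem_filter] at h; omega
        · rw [mem_filter] at h
          intro h'
          exact h ⟨hG, by omega⟩)
    rw [sum_congr rfl (g := fun _ => (n - l).choose (k + 1 - i)),
      sum_congr (s₁ := (MM n k l F).filter fun E => E.card = i') rfl
      (g := fun _ => (n - l).choose (k - i'))] at this
    · simpa using this
    · intro E hE; rw [(mem_filter.1 hE).2]
    · intro E hE; rw [(mem_filter.1 hE).2]
  obtain ⟨hEl, hlE, hEk, hEU, hEn⟩ := mem_MM.1 hE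
  have hEl' := card_le_card hEl
  rw [card_Iv] at hEl'
  have hpos := MM_pos hs hln hE
  have ha : 0 < ((MM n k l F).filter fun G => G.card = E.card).card :=
    card_pos.2 ⟨E, mem_filter.2 ⟨hE, rfl⟩⟩
  have k1 := key E.card (l + t - E.card) (by omega) (by omega)
  have k2 := key (l + t - E.card) E.card (by omega) (by omega)
  have hb : 0 < ((MM n k l F).filter fun G => G.card = l + t - E.card).card := by
    apply Nat.pos_of_ne_zero
    intro h
    rw [h, zero_mul] at k1
    have := Nat.mul_pos ha (Nat.choose_pos hpos)
    omega
  obtain ⟨G, hG⟩ := card_pos.1 hb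
  rw [mem_filter] at hG
  have hGk := (mem_MM.1 hG.1).2.2.1
  have e1 : k + 1 - E.card = (k - E.card) + 1 := by omega
  have e2 : k + 1 - (l + t - E.card) = (k - (l + t - E.card)) + 1 := by omega
  rw [e1] at k1
  rw [e2] at k2
  exact arith1 ha (by omega) k1 k2

lemma MM_empty {n k t l : ℕ} (ht : 2 ≤ t) (htk : t < k) (hn : (t + 1) * (k - t + 1) ≤ n)
    (hn2 : 2 * k + 2 ≤ n + t ∧ k ≤ n) {F : Finset (Finset ℕ)}
    (hF : F ⊆ KSets n k) (hint : IntersectingT t F) (hs : Shifted F) (hln : l ≤ n)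
    (htl : t + 3 ≤ l) (hdet : Det n k F l)
    (hmax : ∀ F' ⊆ KSets n k, IntersectingT t F' → F'.card ≤ F.card) :
    MM n k l F = ∅ := by
  have hn' : 2 * k + 1 ≤ n + t ∧ k ≤ n := ⟨by omega, hn2.2⟩
  by_contra hne
  obtain ⟨E₀, hE₀⟩ := nonempty_iff_ne_empty.2 hne
  have hmid : ∀ E ∈ MM n k l F, 2 * E.card = l + t :=
    fun E hE => MM_mid hn2 hF hint hs hln hdet hmax hE
  obtain ⟨r, hr⟩ : ∃ r, E₀.card = t + r := ⟨E₀.card - t, by have := hmid E₀ hE₀; omega⟩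
  have hl : l = t + 2 * r := by have := hmid E₀ hE₀; omega
  have hcard : ∀ E ∈ MM n k l F, E.card = t + r := by
    intro E hE; have := hmid E hE; omega
  obtain ⟨p, hp⟩ : ∃ p, k = t + r + p :=
    ⟨k - (t + r), by have := (mem_MM.1 hE₀).2.2.1; omega⟩
  have key : ∀ j ∈ (Iv l).erase l,
      ((MM n k l F).filter fun E => j ∉ E).card * (n - l).choose (p + 1) ≤
      ((MM n k l F).filter fun E => j ∈ E).card * (n - l).choose p := by
    intro j hj
    have := repl hn' hF hint hln hdet hmax ((MM n k l F).filter fun E => j ∉ E)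
      ((MM n k l F).filter fun E => j ∈ E) (filter_subset _ _) (filter_subset _ _) (by
        intro E hE G hG h
        rw [mem_filter] at hE
        apply MM_inter_miss hn' hint hs hln hE.1 hG (mem_of_mem_erase hj) hE.2
        rcases h with h | h
        · exact (mem_filter.1 h).2
        · intro h'
          exact h (mem_filter.2 ⟨hG, h'⟩))
    rw [sum_congr rfl (g := fun _ => (n - l).choose (p + 1)),
      sum_congr (s₁ := (MM n k l F).filter fun E => j ∈ E) rfl
      (g := fun _ => (n - l).choose p)] at this
    · simpa using this
    · intro E hE; rw [hcard E (mem_filter.1 hE).1]; congr 1; omega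
    · intro E hE; rw [hcard E (mem_filter.1 hE).1]; congr 1; omega
  have hsum := sum_le_sum key
  rw [← sum_mul, ← sum_mul] at hsum
  have s1 : ∑ j ∈ (Iv l).erase l, ((MM n k l F).filter fun E => j ∉ E).card
      = (MM n k l F).card * r := by
    have := sum_card_bipartiteAbove_eq_sum_card_bipartiteBelow
      (s := (Iv l).erase l) (t := MM n k l F) (fun j E => j ∉ E)
    unfold bipartiteAbove bipartiteBelow at this
    rw [this, card_eq_sum_ones, sum_mul]
    apply sum_congr rfl
    intro E hE
    obtain ⟨hEl, hlE, hEk, hEU, hEn⟩ := mem_MM.1 hE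
    have : ((Iv l).erase l).filter (fun j => j ∉ E) = Iv l \ E := by
      ext x
      simp only [mem_filter, mem_erase, mem_sdiff]
      constructor
      · tauto
      · intro h; exact ⟨⟨fun h' => h.2 (h' ▸ hlE), h.1⟩, h.2⟩
    rw [this, card_sdiff_of_subset hEl, card_Iv, hcard E hE]
    omega
  have s2 : ∑ j ∈ (Iv l).erase l, ((MM n k l F).filter fun E => j ∈ E).card
      = (MM n k l F).card * (t + r - 1) := by
    have := sum_card_bipartiteAbove_eq_sum_card_bipartiteBelow
      (s := (Iv l).erase l) (t := MM n k l F) (fun j E => j ∈ E)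
    unfold bipartiteAbove bipartiteBelow at this
    rw [this, card_eq_sum_ones, sum_mul]
    apply sum_congr rfl
    intro E hE
    obtain ⟨hEl, hlE, hEk, hEU, hEn⟩ := mem_MM.1 hE
    have : ((Iv l).erase l).filter (fun j => j ∈ E) = E.erase l := by
      ext x
      simp only [mem_filter, mem_erase]
      constructor
      · tauto
      · intro h; exact ⟨⟨h.1, hEl h.2⟩, h.2⟩
    rw [this, card_erase_of_mem hlE, hcard E hE, one_mul]
  rw [s1, s2, mul_assoc, mul_assoc] at hsum
  have hM : 0 < (MM n k l F).card := card_pos.2 ⟨E₀, hE₀⟩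
  have h1 := Nat.le_of_mul_le_mul_left hsum hM
  have hpos := MM_pos hs hln hE₀
  have hC : 0 < (n - l).choose p := Nat.choose_pos (by omega)
  have e1 := Nat.choose_succ_right_eq (n - l) p
  have h2 := arith2 (t := t) (r := r) (p := p) (n := n) ht (by omega)
    (by have : k - t + 1 = r + p + 1 := by omega
        rwa [this] at hn)
  rw [← hl] at h2
  have h3 := Nat.mul_le_mul_right (p + 1) h1
  rw [mul_assoc, e1] at h3
  have h4 := (Nat.mul_lt_mul_left hC).2 h2
  nlinarith

lemma det_n {n k : ℕ} {F : Finset (Finset ℕ)} (hF : F ⊆ KSets n k) : Det n k F n := by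
  intro A hA B hB h
  have hA' := mem_KSets.1 (hF hA)
  have hB' := mem_KSets.1 hB
  rw [inter_eq_left.2 hA'.1] at h
  rw [← eq_of_subset_of_card_le h (by omega)]
  exact hA

lemma det_pred {n k l : ℕ} {F : Finset (Finset ℕ)} (hF : F ⊆ KSets n k)
    (hdet : Det n k F (l + 1)) (hM : MM n k (l + 1) F = ∅) : Det n k F l := by
  intro A hA
  have h0 := hdet A hA
  have hsub : (A ∩ Iv (l + 1)).erase (l + 1) ⊆ A ∩ Iv l := by
    intro x hx
    simp only [mem_erase, mem_inter, mem_Iv] at *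
    exact ⟨hx.2.1, hx.2.2.1, by omega⟩
  by_cases hl : l + 1 ∈ A ∩ Iv (l + 1)
  · by_contra hc
    have : A ∩ Iv (l + 1) ∈ MM n k (l + 1) F := by
      refine mem_MM.2 ⟨inter_subset_right, hl,
        (card_le_card inter_subset_left).trans (mem_KSets.1 (hF hA)).2.le, h0, ?_⟩
      exact fun h => hc (up_mono hsub h)
    rw [hM] at this
    simp at this
  · rw [erase_eq_of_notMem hl] at hsub
    exact up_mono hsub h0

lemma det_small {n k t : ℕ} (ht : 2 ≤ t) (htk : t < k) (hn : (t + 1) * (k - t + 1) ≤ n)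
    (hn2 : 2 * k + 2 ≤ n + t ∧ k ≤ n) {F : Finset (Finset ℕ)}
    (hF : F ⊆ KSets n k) (hint : IntersectingT t F) (hs : Shifted F)
    (hmax : ∀ F' ⊆ KSets n k, IntersectingT t F' → F'.card ≤ F.card) :
    ∀ d l, l + d = n → t + 2 ≤ l → Det n k F l := by
  intro d
  induction d with
  | zero => intro l hl _; obtain rfl : l = n := by omega
            exact det_n hF
  | succ d ih =>
    intro l hl htl
    have h1 := ih (l + 1) (by omega) (by omega)
    exact det_pred hF h1 (MM_empty ht htk hn hn2 hF hint hs (by omega) (by omega) h1 hmax)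

lemma star_bound {n k t : ℕ} (htk : t ≤ k) {F : Finset (Finset ℕ)}
    (hF : F ⊆ KSets n k) {E : Finset ℕ} (hE : E ⊆ Iv n) (hEt : E.card = t)
    (h : ∀ A ∈ F, E ⊆ A) : F.card ≤ (n - t).choose (k - t) := by
  have := card_trace (k := k) hE (Subset.refl E) (by omega)
  rw [hEt] at this
  rw [← this]
  apply card_le_card
  intro A hA
  exact mem_filter.2 ⟨hF hA, inter_eq_right.2 (h A hA)⟩

lemma final {n k t : ℕ} (htk : t < k) (hn : (t + 1) * (k - t + 1) ≤ n)
    (hn2 : 2 * k + 2 ≤ n + t ∧ k ≤ n) {F : Finset (Finset ℕ)}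
    (hF : F ⊆ KSets n k) (hint : IntersectingT t F) (hdet : Det n k F (t + 2)) :
    F.card ≤ (n - t).choose (k - t) := by
  have hn' : 2 * k + 1 ≤ n + t ∧ k ≤ n := ⟨by omega, hn2.2⟩
  have htn : t + 2 ≤ n := by omega
  have hI : ∀ A, A ∩ Iv (t + 2) ⊆ Iv n := fun A => inter_subset_right.trans (Iv_mono htn)
  have hc : ∀ A ∈ F, (A ∩ Iv (t + 2)).card ≤ k := fun A hA =>
    (card_le_card inter_subset_left).trans (mem_KSets.1 (hF hA)).2.le
  by_cases hex : ∃ A ∈ F, (A ∩ Iv (t + 2)).card ≤ t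
  · obtain ⟨A, hA, hAt⟩ := hex
    have h0 : ∀ B ∈ F, t ≤ (A ∩ Iv (t + 2) ∩ (B ∩ Iv (t + 2))).card := fun B hB =>
      up_inter hn' hint (hI A) (hI B) (hc A hA) (hc B hB) (hdet A hA) (hdet B hB)
    have h1 := h0 A hA
    rw [inter_self] at h1
    apply star_bound htk.le hF (hI A) (by omega)
    intro B hB
    have h2 := eq_of_subset_of_card_le (inter_subset_left (s₁ := A ∩ Iv (t + 2))
      (s₂ := B ∩ Iv (t + 2))) (hAt.trans (h0 B hB))
    rw [← h2]
    exact inter_subset_right.trans inter_subset_left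
  · push Not at hex
    set S := (KSets n k).filter fun A => A ∩ Iv t = Iv t with hS
    have hSc : S.card = (n - t).choose (k - t) := by
      rw [hS, card_trace (Iv_mono (by omega)) (Subset.refl _) (by rw [card_Iv]; omega), card_Iv]
    have htt : Iv t ⊆ Iv (t + 2) := Iv_mono (by omega)
    have u1 : (F \ S).card ≤ t * (n - (t + 2)).choose (k - (t + 1)) := by
      have hZ : ∀ E ∈ (Iv t).image fun x => (Iv (t + 2)).erase x,
          E ⊆ Iv (t + 2) ∧ E.card = t + 1 := by
        intro E hE
        obtain ⟨x, hx, rfl⟩ := mem_image.1 hE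
        refine ⟨erase_subset _ _, ?_⟩
        rw [card_erase_of_mem (htt hx), card_Iv]
        rfl
      have h1 := card_traces (n := n) (k := k) (S := Iv (t + 2))
        ((Iv t).image fun x => (Iv (t + 2)).erase x) (Iv_mono htn)
        (fun E hE => ⟨(hZ E hE).1, by rw [(hZ E hE).2]; omega⟩)
      rw [sum_congr rfl (g := fun _ => (n - (t + 2)).choose (k - (t + 1)))
        (fun E hE => by rw [(hZ E hE).2, card_Iv]), sum_const, smul_eq_mul] at h1
      have h2 : ((Iv t).image fun x => (Iv (t + 2)).erase x).card ≤ t :=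
        card_image_le.trans (card_Iv t).le
      refine le_trans ?_ (h1.le.trans (Nat.mul_le_mul_right _ h2))
      apply card_le_card
      intro A hA
      rw [mem_sdiff] at hA
      refine mem_filter.2 ⟨hF hA.1, ?_⟩
      have h3 : ¬ Iv t ⊆ A := fun h =>
        hA.2 (mem_filter.2 ⟨hF hA.1, inter_eq_right.2 h⟩)
      rw [not_subset] at h3
      obtain ⟨x, hx, hxA⟩ := h3
      refine mem_image.2 ⟨x, hx, ?_⟩
      symm
      apply eq_of_subset_of_card_le
      · intro y hy
        rw [mem_inter] at hy
        exact mem_erase.2 ⟨fun h => hxA (h ▸ hy.1), hy.2⟩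
      · rw [card_erase_of_mem (htt hx), card_Iv]
        exact hex A hA.1
    have u2 : (n - (t + 2)).choose (k - t) ≤ (S \ F).card := by
      have h1 := card_trace (n := n) (k := k) (S := Iv (t + 2)) (E := Iv t) (Iv_mono htn) htt
        (by rw [card_Iv]; omega)
      rw [card_Iv, card_Iv] at h1
      rw [← h1]
      apply card_le_card
      intro A hA
      rw [mem_filter] at hA
      rw [mem_sdiff]
      constructor
      · refine mem_filter.2 ⟨hA.1, inter_eq_right.2 ?_⟩
        rw [← hA.2]; exact inter_subset_left
      · intro h
        have := hex A h
        rw [hA.2, card_Iv] at this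
        omega
    have u3 : t * (n - (t + 2)).choose (k - (t + 1)) ≤ (n - (t + 2)).choose (k - t) := by
      obtain ⟨a, rfl⟩ : ∃ a, k = t + 1 + a := ⟨k - (t + 1), by omega⟩
      have e1 : t + 1 + a - (t + 1) = a := by omega
      have e2 : t + 1 + a - t = a + 1 := by omega
      rw [e1, e2]
      rw [e2] at hn
      have e3 := Nat.choose_succ_right_eq (n - (t + 2)) a
      have e4 : t * (a + 1) ≤ n - (t + 2) - a := by
        have : (t + 1) * (a + 1 + 1) = t * (a + 1) + t + 2 + a := by ring
        omega
      apply Nat.le_of_mul_le_mul_right (c := a + 1) _ (by omega)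
      rw [e3]
      calc _ = (n - (t + 2)).choose a * (t * (a + 1)) := by ring
        _ ≤ _ := Nat.mul_le_mul_left _ e4
    have v1 := card_sdiff_add_card_inter F S
    have v2 := card_sdiff_add_card_inter S F
    rw [inter_comm] at v2
    omega

lemma swap_inj {i j : ℕ} {A B : Finset ℕ} (hA : j ∈ A ∧ i ∉ A) (hB : j ∈ B ∧ i ∉ B)
    (h : insert i (A.erase j) = insert i (B.erase j)) : A = B := by
  have h1 : A.erase j = B.erase j := by
    rw [← erase_insert (a := i) (s := A.erase j) (by simp [hA.2]), h,
      erase_insert (by simp [hB.2])]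
  rw [← insert_erase hA.1, h1, insert_erase hB.1]

lemma shiftSet_injOn (i j : ℕ) (F : Finset (Finset ℕ)) :
    Set.InjOn (shiftSet i j F) (F : Set (Finset ℕ)) := by
  intro A hA B hB h
  unfold shiftSet at h
  split_ifs at h with h1 h2 h2
  · exact swap_inj ⟨h1.1, h1.2.1⟩ ⟨h2.1, h2.2.1⟩ h
  · exact absurd (h ▸ hB) h1.2.2
  · exact absurd (h ▸ hA) h2.2.2
  · exact h

lemma card_swap {i j : ℕ} {S : Finset ℕ} (hj : j ∈ S) (hi : i ∉ S) :
    (insert i (S.erase j)).card = S.card := by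
  rw [card_insert_of_notMem (by simp [hi]), card_erase_of_mem hj]
  have := card_pos.2 ⟨j, hj⟩
  omega

lemma shift_inter_aux {t i j : ℕ} {F : Finset (Finset ℕ)} (hij : i ≠ j)
    (hint : IntersectingT t F) {A B : Finset ℕ} (hA : A ∈ F) (hB : B ∈ F)
    (h1 : j ∈ A ∧ i ∉ A ∧ insert i (A.erase j) ∉ F)
    (h2 : ¬ (j ∈ B ∧ i ∉ B ∧ insert i (B.erase j) ∉ F)) :
    t ≤ (insert i (A.erase j) ∩ B).card := by
  have h0 := hint A hA B hB
  by_cases hj : j ∈ B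
  · by_cases hi : i ∈ B
    · rw [insert_inter_of_mem hi, erase_inter,
        card_swap (mem_inter.2 ⟨h1.1, hj⟩) (by simp [h1.2.1])]
      exact h0
    · have h3 : insert i (B.erase j) ∈ F := by
        by_contra h; exact h2 ⟨hj, hi, h⟩
      have h4 := hint A hA _ h3
      rw [inter_insert_of_notMem h1.2.1, inter_erase] at h4
      rwa [insert_inter_of_notMem hi, erase_inter]
  · refine h0.trans (card_le_card ?_)
    intro x hx
    rw [mem_inter] at *
    exact ⟨mem_insert_of_mem (mem_erase.2 ⟨fun h => hj (h ▸ hx.2), hx.1⟩), hx.2⟩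

lemma shift_inter {t i j : ℕ} {F : Finset (Finset ℕ)} (hij : i ≠ j)
    (hint : IntersectingT t F) : IntersectingT t (shiftFam i j F) := by
  intro A' hA' B' hB'
  obtain ⟨A, hA, rfl⟩ := mem_image.1 hA'
  obtain ⟨B, hB, rfl⟩ := mem_image.1 hB'
  unfold shiftSet
  split_ifs with h1 h2 h2
  · have : insert i (A.erase j) ∩ insert i (B.erase j) = insert i ((A ∩ B).erase j) := by
      ext x; simp only [mem_inter, mem_insert, mem_erase]; tauto
    rw [this, card_swap (mem_inter.2 ⟨h1.1, h2.1⟩) (by simp [h1.2.1])]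
    exact hint A hA B hB
  · exact shift_inter_aux hij hint hA hB h1 h2
  · rw [inter_comm]
    exact shift_inter_aux hij hint hB hA h2 h1
  · exact hint A hA B hB

lemma exists_shifted (n k t : ℕ) : ∃ F ⊆ KSets n k, IntersectingT t F ∧ Shifted F ∧
    ∀ F' ⊆ KSets n k, IntersectingT t F' → F'.card ≤ F.card := by
  classical
  set 𝒮 := (KSets n k).powerset.filter fun F => IntersectingT t F with h𝒮
  have hne : 𝒮.Nonempty := ⟨∅, by
    rw [h𝒮, mem_filter, mem_powerset]
    exact ⟨empty_subset _, fun A hA => absurd hA (notMem_empty A)⟩⟩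
  obtain ⟨F₀, hF₀, hF₀max⟩ := exists_max_image 𝒮 card hne
  obtain ⟨F, hF, hFmin⟩ := exists_min_image (𝒮.filter fun F => F.card = F₀.card)
    (fun F => ∑ A ∈ F, ∑ x ∈ A, x) ⟨F₀, mem_filter.2 ⟨hF₀, rfl⟩⟩
  rw [mem_filter, h𝒮, mem_filter, mem_powerset] at hF
  refine ⟨F, hF.1.1, hF.1.2, ?_, ?_⟩
  · intro i j hi hij A hA hjA hiA
    by_contra hc
    have hw : ∀ B, j ∈ B → i ∉ B → ∑ x ∈ insert i (B.erase j), x < ∑ x ∈ B, x := by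
      intro B hj hiB
      rw [sum_insert (by simp [hiB]), ← add_sum_erase B _ hj]
      omega
    have hmem : shiftFam i j F ∈ 𝒮.filter fun F => F.card = F₀.card := by
      rw [mem_filter, h𝒮, mem_filter, mem_powerset]
      refine ⟨⟨?_, shift_inter hij.ne hF.1.2⟩, ?_⟩
      · intro B' hB'
        obtain ⟨B, hB, rfl⟩ := mem_image.1 hB'
        unfold shiftSet
        split_ifs with h
        · exact swap_mem_KSets hi hij (hF.1.1 hB) h.1 h.2.1
        · exact hF.1.1 hB
      · rw [shiftFam, card_image_of_injOn (shiftSet_injOn i j F), hF.2]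
    have h1 := hFmin _ hmem
    rw [shiftFam, sum_image (shiftSet_injOn i j F)] at h1
    apply absurd h1
    rw [not_le]
    apply sum_lt_sum
    · intro B hB
      unfold shiftSet
      split_ifs with h
      · exact (hw B h.1 h.2.1).le
      · exact le_refl _
    · refine ⟨A, hA, ?_⟩
      unfold shiftSet
      rw [if_pos ⟨hjA, hiA, hc⟩]
      exact hw A hjA hiA
  · intro F' hF' hint'
    rw [hF.2]
    exact hF₀max F' (by rw [h𝒮, mem_filter, mem_powerset]; exact ⟨hF', hint'⟩)

lemma ekr_one {n k : ℕ} (hn : 2 * k ≤ n) {F : Finset (Finset ℕ)}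
    (hF : F ⊆ KSets n k) (hint : IntersectingT 1 F) : F.card ≤ (n - 1).choose (k - 1) := by
  classical
  let f : Finset ℕ → Finset (Fin n) := fun A => univ.filter fun x => x.1 + 1 ∈ A
  have hg : ∀ A ∈ F, (f A).image (fun x => x.1 + 1) = A := by
    intro A hA
    have hA' := (mem_KSets.1 (hF hA)).1
    ext y
    simp only [f, mem_image, mem_filter, mem_univ, true_and]
    constructor
    · rintro ⟨x, hx, rfl⟩; exact hx
    · intro hy
      have := mem_Iv.1 (hA' hy)
      have e : y - 1 + 1 = y := by omega
      exact ⟨⟨y - 1, by omega⟩, by simpa [e] using hy, e⟩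
  have hinj : Set.InjOn f (F : Set (Finset ℕ)) := by
    intro A hA B hB h
    rw [← hg A hA, ← hg B hB, h]
  rw [← card_image_of_injOn hinj]
  apply erdos_ko_rado
  · intro A' hA' B' hB' hd
    obtain ⟨A, hA, rfl⟩ := mem_image.1 hA'
    obtain ⟨B, hB, rfl⟩ := mem_image.1 hB'
    obtain ⟨y, hy⟩ := card_pos.1 (hint A hA B hB)
    rw [mem_inter] at hy
    have := mem_Iv.1 ((mem_KSets.1 (hF hA)).1 hy.1)
    have e : y - 1 + 1 = y := by omega
    have hx : ∀ C, y ∈ C → (⟨y - 1, by omega⟩ : Fin n) ∈ f C := by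
      intro C hC
      simpa [f, e] using hC
    exact disjoint_left.1 hd (hx A hy.1) (hx B hy.2)
  · intro A' hA'
    obtain ⟨A, hA, rfl⟩ := mem_image.1 hA'
    rw [← (mem_KSets.1 (hF hA)).2]
    conv_rhs => rw [← hg A hA]
    rw [card_image_of_injective]
    intro x y h
    apply Fin.ext
    have : x.1 + 1 = y.1 + 1 := h
    omega
  · omega

end WEKR

/-- **`t`-intersecting Erdős–Ko–Rado theorem with Wilson's sharp bound.** -/
theorem stmt_17 (t k n : ℕ) (ht : 0 < t) (htk : t ≤ k) (hkn : k ≤ n)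
    (hn : (t + 1) * (k - t + 1) ≤ n)
    (F : Finset (Finset ℕ)) (hF : F ⊆ KSets n k) (hint : IntersectingT t F) :
    F.card ≤ (n - t).choose (k - t) := by
  rcases Nat.lt_or_ge t k with hlt | hge
  · rcases Nat.lt_or_ge t 2 with ht2 | ht2
    · obtain rfl : t = 1 := by omega
      exact WEKR.ekr_one (by omega) hF hint
    · have hn2 : 2 * k + 2 ≤ n + t ∧ k ≤ n := by
        refine ⟨?_, hkn⟩
        obtain ⟨a, rfl⟩ := Nat.exists_eq_add_of_lt hlt
        obtain ⟨s, rfl⟩ := Nat.exists_eq_add_of_le ht2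
        have e : 2 + s + a + 1 - (2 + s) + 1 = a + 2 := by omega
        rw [e] at hn
        nlinarith [Nat.zero_le (s * a)]
      obtain ⟨G, hG, hGint, hGs, hGmax⟩ := WEKR.exists_shifted n k t
      refine (hGmax F hF hint).trans ?_
      apply WEKR.final hlt hn hn2 hG hGint
      exact WEKR.det_small ht2 hlt hn hn2 hG hGint hGs hGmax (n - (t + 2)) (t + 2)
        (by omega) (le_refl _)
  · obtain rfl : t = k := by omega
    rw [Nat.sub_self, Nat.choose_zero_right, card_le_one]
    intro A hA B hB
    have hA' := (WEKR.mem_KSets.1 (hF hA)).2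
    have hB' := (WEKR.mem_KSets.1 (hF hB)).2
    have h := hint A hA B hB
    have h1 := eq_of_subset_of_card_le (inter_subset_left (s₁ := A) (s₂ := B)) (by omega)
    have h2 := eq_of_subset_of_card_le (inter_subset_right (s₁ := A) (s₂ := B)) (by omega)
    exact h1.symm.trans h2
end
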